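/- For every constant M there exists a constant A = A(M) > 0 such that the following holds. Let Π be a set of n planes and S a set of k spheres in ℝ³ such that there are no M planes of Π and 3 spheres of S with every one of these planes tangent to every one of these spheres, and no 3 planes of Π and M spheres of S with every one of these planes tangent to every one of these spheres (i.e., the plane-sphere tangency graph contains no K_{M,3} and no K_{3,M}). Then the number T(Π,S) of tangent pairs satisfies T(Π,S) ≤ A · ( n^{3/4} k^{3/4} + n + k ). -/

import Mathlib

open scoped RealInnerProductSpace

noncomputable section

abbrev Pt3 := EuclideanSpace ℝ (Fin 3)

/-- A plane in space, given by a nonzero normal vector and an offset. -/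
def IsPlane3 (s : Set Pt3) : Prop :=
  ∃ u : Pt3, ∃ d : ℝ, u ≠ 0 ∧ s = {x : Pt3 | ⟪u, x⟫ = d}

/-- A sphere in space: a metric sphere with positive radius. -/
def IsSphere3 (s : Set Pt3) : Prop :=
  ∃ c : Pt3, ∃ r : ℝ, 0 < r ∧ s = Metric.sphere c r

/-- Two subsets of space are tangent if they intersect in exactly one point. -/
def Tangent3 (a b : Set Pt3) : Prop := ∃ p : Pt3, a ∩ b = {p}

namespace PST
open Module
theorem span_count {ι E α : Type*} [AddCommGroup E] [Module ℝ E] [LinearOrder α]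
    (f : ι → α) (hf : Function.Injective f) (v : ι → E) (s : Finset ι) :
    finrank ℝ (Submodule.span ℝ (v '' (s : Set ι))) =
      Set.ncard {e | e ∈ s ∧ v e ∉ Submodule.span ℝ (v '' {e' | e' ∈ s ∧ f e' < f e})} := by
  classical
  induction s using Finset.induction_on_max_value f with
  | empty =>
    have h : Submodule.span ℝ (v '' ((∅ : Finset ι) : Set ι)) = ⊥ := by simp
    rw [h, finrank_bot]; simp
  | insert a s ha hmax ih =>
    have hlt : ∀ x ∈ s, f x < f a := fun x hx =>
      lt_of_le_of_ne (hmax x hx) (fun h => ha (hf h ▸ hx))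
    have hset : ∀ e ∈ s, {e' | e' ∈ insert a s ∧ f e' < f e} = {e' | e' ∈ s ∧ f e' < f e} := by
      intro e he
      ext e'
      simp only [Finset.mem_insert, Set.mem_ofPred_eq]
      constructor
      · rintro ⟨rfl | h, h2⟩
        · exact absurd h2 (not_lt.2 (hmax e he))
        · exact ⟨h, h2⟩
      · rintro ⟨h, h2⟩; exact ⟨Or.inr h, h2⟩
    have hseta : {e' | e' ∈ insert a s ∧ f e' < f a} = (s : Set ι) := by
      ext e'
      simp only [Finset.mem_insert, Set.mem_ofPred_eq, Finset.mem_coe]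
      constructor
      · rintro ⟨rfl | h, h2⟩
        · exact absurd h2 (lt_irrefl _)
        · exact h
      · intro h; exact ⟨Or.inr h, hlt _ h⟩
    have : FiniteDimensional ℝ (Submodule.span ℝ (v '' (s : Set ι))) :=
      FiniteDimensional.span_of_finite ℝ ((Finset.finite_toSet s).image v)
    by_cases hv : v a ∈ Submodule.span ℝ (v '' (s : Set ι))
    · have h1 : Submodule.span ℝ (v '' ((insert a s : Finset ι) : Set ι)) =
          Submodule.span ℝ (v '' (s : Set ι)) := by
        rw [Finset.coe_insert, Set.image_insert_eq, Submodule.span_insert_eq_span hv]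
      rw [h1, ih]
      congr 1
      ext e
      simp only [Set.mem_ofPred_eq]
      constructor
      · rintro ⟨he, h⟩
        exact ⟨Finset.mem_insert_of_mem he, by rwa [hset e he]⟩
      · rintro ⟨he, h⟩
        rcases Finset.mem_insert.1 he with rfl | he
        · rw [hseta] at h; exact absurd hv h
        · exact ⟨he, by rwa [hset e he] at h⟩
    · have h1 : Submodule.span ℝ (v '' ((insert a s : Finset ι) : Set ι)) =
          Submodule.span ℝ (v '' (s : Set ι)) ⊔ Submodule.span ℝ {v a} := by
        rw [Finset.coe_insert, Set.image_insert_eq, Submodule.span_insert, sup_comm]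
      have h2 : {e | e ∈ insert a s ∧ v e ∉ Submodule.span ℝ (v '' {e' | e' ∈ insert a s ∧ f e' < f e})}
          = insert a {e | e ∈ s ∧ v e ∉ Submodule.span ℝ (v '' {e' | e' ∈ s ∧ f e' < f e})} := by
        ext e
        simp only [Set.mem_ofPred_eq, Set.mem_insert_iff]
        constructor
        · rintro ⟨he, h⟩
          rcases Finset.mem_insert.1 he with rfl | he
          · exact Or.inl rfl
          · exact Or.inr ⟨he, by rwa [hset e he] at h⟩
        · rintro (rfl | ⟨he, h⟩)
          · exact ⟨Finset.mem_insert_self _ _, by rwa [hseta]⟩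
          · exact ⟨Finset.mem_insert_of_mem he, by rwa [hset e he]⟩
      rw [h2, Set.ncard_insert_of_notMem (fun h => ha h.1)
        (s.finite_toSet.subset (fun x hx => hx.1)), ← ih, h1]
      have hva : v a ≠ 0 := fun h => hv (h ▸ Submodule.zero_mem _)
      have := Submodule.finrank_sup_add_finrank_inf_eq (Submodule.span ℝ (v '' (s : Set ι))) (Submodule.span ℝ {v a})
      rw [finrank_span_singleton hva] at this
      have h3 : Submodule.span ℝ (v '' (s : Set ι)) ⊓ Submodule.span ℝ {v a} = ⊥ := by
        rw [← disjoint_iff, Submodule.disjoint_span_singleton' hva]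
        exact hv
      rw [h3, finrank_bot] at this
      simpa using this

theorem trace_sq_le {m : Type*} [Fintype m] [DecidableEq m] (B : Matrix m m ℝ) (hB : B.transpose = B) :
    (∑ i, B i i)^2 ≤ B.rank * ∑ i, ∑ j, (B i j)^2 := by
  have hH : B.IsHermitian := by
    rw [Matrix.IsHermitian, Matrix.conjTranspose_eq_transpose_of_trivial, hB]
  have h1 : B.trace = ∑ i, hH.eigenvalues i := by simpa using hH.trace_eq_sum_eigenvalues
  have h2 : ∑ i, ∑ j, (B i j)^2 = ∑ i, (hH.eigenvalues i)^2 := by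
    have : ∑ i, ∑ j, (B i j)^2 = (B * B).trace := by
      simp only [Matrix.trace, Matrix.diag, Matrix.mul_apply]
      refine Finset.sum_congr rfl fun i _ => Finset.sum_congr rfl fun j _ => ?_
      have : B j i = B i j := congrFun (congrFun hB i) j
      rw [this]; ring
    rw [this]
    have hs := hH.spectral_theorem
    set U := hH.eigenvectorUnitary with hU
    rw [Unitary.conjStarAlgAut_apply] at hs
    have hUU : (star (U : Matrix m m ℝ)) * (U : Matrix m m ℝ) = 1 := Unitary.coe_star_mul_self U
    have : B * B = (U : Matrix m m ℝ) * (Matrix.diagonal (hH.eigenvalues) * Matrix.diagonal (hH.eigenvalues)) * star (U : Matrix m m ℝ) := by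
      conv_lhs => rw [hs]
      simp only [Matrix.mul_assoc]
      congr 2
      rw [← Matrix.mul_assoc (star _), hUU, Matrix.one_mul]
      rfl
    rw [this, Matrix.trace_mul_comm, ← Matrix.mul_assoc, hUU, Matrix.one_mul, Matrix.diagonal_mul_diagonal, Matrix.trace_diagonal]
    simp [sq]
  have h3 : B.rank = (Finset.univ.filter (fun i => hH.eigenvalues i ≠ 0)).card := by
    rw [hH.rank_eq_card_non_zero_eigs, Fintype.card_subtype]
  have h4 : (∑ i, hH.eigenvalues i) = ∑ i ∈ Finset.univ.filter (fun i => hH.eigenvalues i ≠ 0), hH.eigenvalues i := by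
    rw [Finset.sum_filter_ne_zero]
  change (B.trace)^2 ≤ _
  rw [h1, h2, h3, h4]
  refine sq_sum_le_card_mul_sum_sq.trans ?_
  gcongr
  exact Finset.filter_subset _ _
end PST

namespace PST
open Module
open Matrix

def G {ι κ : Type*} [Fintype ι] (W : ι → κ → ℝ) (c : ι → ℝ) : Matrix κ κ ℝ :=
  ∑ p, c p • vecMulVec (W p) (W p)

theorem G_eq {ι κ : Type*} [Fintype ι] [DecidableEq ι] (W : ι → κ → ℝ) (c : ι → ℝ) :
    G W c = (Matrix.of W)ᵀ * diagonal c * Matrix.of W := by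
  ext i j
  rw [Matrix.mul_apply]
  simp only [G, Matrix.sum_apply, Matrix.smul_apply, vecMulVec_apply, mul_diagonal,
    transpose_apply, of_apply, smul_eq_mul]
  exact Finset.sum_congr rfl fun p _ => by ring

theorem quad_sum {ι κ : Type*} [Fintype κ] (s : Finset ι) (W : ι → κ → ℝ) (c : ι → ℝ) (x : κ → ℝ) :
    x ⬝ᵥ ((∑ p ∈ s, c p • vecMulVec (W p) (W p)) *ᵥ x) = ∑ p ∈ s, c p * (W p ⬝ᵥ x)^2 := by
  rw [Matrix.sum_mulVec, dotProduct_sum]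
  refine Finset.sum_congr rfl fun p _ => ?_
  rw [Matrix.smul_mulVec, vecMulVec_mulVec, dotProduct_smul]
  rw [op_smul_eq_smul, dotProduct_smul, dotProduct_comm x (W p), smul_eq_mul, smul_eq_mul, sq]

theorem herm_sum {ι κ : Type*} (s : Finset ι) (W : ι → κ → ℝ) (c : ι → ℝ) :
    (∑ p ∈ s, c p • vecMulVec (W p) (W p)).IsHermitian := by
  rw [Matrix.IsHermitian, Matrix.conjTranspose_eq_transpose_of_trivial]
  ext i j
  simp only [transpose_apply, Matrix.sum_apply, Matrix.smul_apply, vecMulVec_apply, smul_eq_mul]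
  exact Finset.sum_congr rfl fun p _ => by ring

theorem posDef_sum {ι κ : Type*} [Fintype κ] (s : Finset ι) (W : ι → κ → ℝ) (c : ι → ℝ)
    (hc : ∀ p ∈ s, 0 < c p) (hW : ∀ x : κ → ℝ, (∀ p ∈ s, W p ⬝ᵥ x = 0) → x = 0) :
    (∑ p ∈ s, c p • vecMulVec (W p) (W p)).PosDef := by
  refine Matrix.PosDef.of_dotProduct_mulVec_pos (herm_sum s W c) ?_
  intro x hx
  rw [star_trivial, quad_sum]
  by_contra h
  apply hx
  apply hW
  have h0 : ∑ p ∈ s, c p * (W p ⬝ᵥ x)^2 = 0 :=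
    le_antisymm (not_lt.1 h) (Finset.sum_nonneg fun p hp => mul_nonneg (hc p hp).le (sq_nonneg _))
  intro p hp
  have := (Finset.sum_eq_zero_iff_of_nonneg (fun p hp => mul_nonneg (hc p hp).le (sq_nonneg _))).1 h0 p hp
  have h2 := (mul_eq_zero.1 this).resolve_left (hc p hp).ne'
  exact pow_eq_zero_iff (two_ne_zero) |>.1 h2

theorem det_rank1 {κ : Type*} [Fintype κ] [DecidableEq κ] (A : Matrix κ κ ℝ) (hA : IsUnit A.det)
    (a : ℝ) (w : κ → ℝ) :
    (A + a • vecMulVec w w).det = A.det * (1 + a * (w ⬝ᵥ (A⁻¹ *ᵥ w))) := by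
  have h := det_add_replicateCol_mul_replicateRow (ι := Unit) hA (a • w) w
  have h1 : replicateCol Unit (a • w) * replicateRow Unit w = a • vecMulVec w w := by
    ext i j
    simp [Matrix.mul_apply, vecMulVec_apply, mul_assoc]
  rw [h1] at h
  rw [h]
  congr 1
  have : replicateRow Unit w * A⁻¹ * replicateCol Unit (a • w) = Matrix.of fun _ _ => a * (w ⬝ᵥ (A⁻¹ *ᵥ w)) := by
    ext i j
    rw [Matrix.mul_assoc, of_apply]
    simp only [Matrix.mul_apply, replicateRow_apply, replicateCol_apply, dotProduct, mulVec, Pi.smul_apply, smul_eq_mul, Finset.mul_sum]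
    exact Finset.sum_congr rfl fun i _ => Finset.sum_congr rfl fun j _ => by ring
  rw [this, det_unique]
  simp

theorem det_mono {ι κ : Type*} [Fintype κ] [DecidableEq κ] (s : Finset ι) (W : ι → κ → ℝ) (c : ι → ℝ)
    (hc : ∀ p, 0 ≤ c p) (A : Matrix κ κ ℝ) (hA : A.PosDef) :
    A.det ≤ (A + ∑ p ∈ s, c p • vecMulVec (W p) (W p)).det := by
  classical
  have hpsd : ∀ t : Finset ι, (∑ p ∈ t, c p • vecMulVec (W p) (W p)).PosSemidef := by
    intro t
    refine Matrix.PosSemidef.of_dotProduct_mulVec_nonneg (herm_sum t W c) ?_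
    intro x
    rw [star_trivial, quad_sum]
    exact Finset.sum_nonneg fun p hp => mul_nonneg (hc p) (sq_nonneg _)
  induction s using Finset.induction_on with
  | empty => simp
  | insert a s ha ih =>
    rw [Finset.sum_insert ha, add_comm (c a • _), ← add_assoc]
    have hP := hA.add_posSemidef (hpsd s)
    rw [det_rank1 _ (hP.det_pos.ne'.isUnit)]
    refine ih.trans ?_
    have h2 : 0 ≤ W a ⬝ᵥ ((A + ∑ p ∈ s, c p • vecMulVec (W p) (W p))⁻¹ *ᵥ W a) := by
      have := hP.inv.posSemidef.dotProduct_mulVec_nonneg (W a)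
      simpa using this
    have := mul_nonneg (hc a) h2
    nlinarith [hP.det_pos]
end PST

namespace PST
open Module
open Matrix

theorem abel_sum {ι α : Type*} [LinearOrder α] (f : ι → α) (hf : Function.Injective f)
    (t β : ι → ℝ) (hft : ∀ x y, f x ≤ f y → t y ≤ t x) (s : Finset ι)
    (h : ∀ x ∈ s, 0 ≤ ∑ p ∈ s with f p ≤ f x, β p) :
    ∀ c : ℝ, (∀ x ∈ s, c ≤ t x) → c * ∑ p ∈ s, β p ≤ ∑ p ∈ s, β p * t p := by
  classical
  induction s using Finset.induction_on_max_value f with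
  | empty => intro c _; simp
  | insert a s ha hmax ih =>
    intro c hc
    have hlt : ∀ x ∈ s, f x < f a := fun x hx =>
      lt_of_le_of_ne (hmax x hx) (fun h => ha (hf h ▸ hx))
    have h1 : ∀ x ∈ s, 0 ≤ ∑ p ∈ s with f p ≤ f x, β p := by
      intro x hx
      have := h x (Finset.mem_insert_of_mem hx)
      rwa [Finset.filter_insert, if_neg (not_le.2 (hlt x hx))] at this
    have h2 := ih h1 (t a) (fun x hx => hft _ _ (hmax x hx))
    have h3 := h a (Finset.mem_insert_self _ _)
    rw [Finset.filter_true_of_mem] at h3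
    · rw [Finset.sum_insert ha] at h3
      rw [Finset.sum_insert ha, Finset.sum_insert ha]
      have := hc a (Finset.mem_insert_self _ _)
      nlinarith
    · intro x hx
      rcases Finset.mem_insert.1 hx with rfl | hx
      · exact le_rfl
      · exact hmax x hx

theorem greedy {ι κ : Type*} [Fintype ι] [Fintype κ] [DecidableEq κ] (W : ι → κ → ℝ) (l : ℝ)
    (hk : l * Fintype.card ι = Fintype.card κ)
    (hr : ∀ Q : Finset ι, l * Q.card ≤ finrank ℝ (Submodule.span ℝ (W '' (Q : Set ι)))) (t : ι → ℝ) :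
    ∃ g : κ → ι, Function.Injective g ∧ (Matrix.of (W ∘ g)).det ≠ 0 ∧ l * ∑ p, t p ≤ ∑ i, t (g i) := by
  classical
  let f : ι → ℝ ×ₗ Fin (Fintype.card ι) := fun p => toLex (-t p, Fintype.equivFin ι p)
  have hf : Function.Injective f := by
    intro x y h
    have := congrArg (fun z => (ofLex z).2) h
    simpa [f] using this
  have hft : ∀ x y, f x ≤ f y → t y ≤ t x := by
    intro x y h
    have h' := Prod.Lex.monotone_fst _ _ h
    simpa [f] using h'
  let B : Finset ι := Finset.univ.filter (fun p => W p ∉ Submodule.span ℝ (W '' {p' | f p' < f p}))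
  have hI : ∀ s : Finset ι, (∀ x ∈ s, ∀ y, f y < f x → y ∈ s) →
      finrank ℝ (Submodule.span ℝ (W '' (s : Set ι))) = (s.filter (· ∈ B)).card := by
    intro s hs
    rw [span_count f hf W s, ← Set.ncard_coe_finset]
    congr 1
    ext e
    simp only [Set.mem_ofPred_eq, Finset.coe_filter, B, Finset.mem_filter, Finset.mem_univ, true_and]
    refine and_congr_right fun he => ?_
    have : {e' | e' ∈ s ∧ f e' < f e} = {e' | f e' < f e} := by
      ext e'
      exact ⟨fun h => h.2, fun h => ⟨hs e he e' h, h⟩⟩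
    rw [this]
  have hBcard : B.card = Fintype.card κ := by
    have h1 := hI Finset.univ (fun _ _ _ _ => Finset.mem_univ _)
    have h2 := hr Finset.univ
    rw [Finset.card_univ, hk, h1] at h2
    have h3 : finrank ℝ (Submodule.span ℝ (W '' ((Finset.univ : Finset ι) : Set ι))) ≤ Fintype.card κ := by
      refine (Submodule.finrank_le _).trans ?_
      simp
    rw [h1] at h3
    have h4 : (Finset.univ.filter (· ∈ B)) = B := by ext; simp
    rw [h4] at h2 h3
    exact le_antisymm h3 (by exact_mod_cast h2)
  have hBspan : finrank ℝ (Submodule.span ℝ (W '' (B : Set ι))) = Fintype.card κ := by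
    rw [span_count f hf W B, ← hBcard, ← Set.ncard_coe_finset]
    congr 1
    ext e
    simp only [Set.mem_ofPred_eq, Finset.mem_coe]
    refine ⟨fun h => h.1, fun h => ⟨h, fun h2 => ?_⟩⟩
    have h3 := (Finset.mem_filter.1 h).2
    exact h3 (Submodule.span_mono (Set.image_mono (fun x hx => hx.2)) h2)
  obtain ⟨g⟩ : Nonempty (κ ≃ B) := by
    rw [← Fintype.card_eq]; simp [hBcard]
  refine ⟨fun i => (g i : ι), fun i j h => g.injective (Subtype.ext h), ?_, ?_⟩
  · have hli : LinearIndependent ℝ (fun i => W (g i)) := by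
      have : Set.range (fun i => W (g i)) = W '' (B : Set ι) := by
        ext x
        simp only [Set.mem_range, Set.mem_image, Finset.mem_coe]
        constructor
        · rintro ⟨i, rfl⟩; exact ⟨g i, (g i).2, rfl⟩
        · rintro ⟨p, hp, rfl⟩; exact ⟨g.symm ⟨p, hp⟩, by simp⟩
      rw [linearIndependent_iff_card_eq_finrank_span, Set.finrank, ← hBspan, this]
    have := Matrix.linearIndependent_rows_iff_isUnit (A := Matrix.of (W ∘ fun i => (g i : ι))) |>.1 hli
    exact ((Matrix.isUnit_iff_isUnit_det _).1 this).ne_zero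
  · have hsum : ∑ i, t (g i) = ∑ p, if p ∈ B then t p else 0 := by
      rw [← Finset.sum_filter]
      have h4 : (Finset.univ.filter (· ∈ B)) = B := by ext; simp
      rw [h4, ← Finset.sum_coe_sort B t]
      exact Fintype.sum_equiv g _ _ (fun _ => rfl)
    let β : ι → ℝ := fun p => (if p ∈ B then 1 else 0) - l
    have hβ : ∀ s : Finset ι, ∑ p ∈ s, β p = (s.filter (· ∈ B)).card - l * s.card := by
      intro s
      simp only [β, Finset.sum_sub_distrib, Finset.sum_boole, Finset.sum_const, nsmul_eq_mul, mul_comm]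
    have key := abel_sum f hf t β hft Finset.univ (by
      intro x _
      rw [hβ, sub_nonneg]
      rw [← hI]
      · exact hr _
      · intro y hy z hz
        simp only [Finset.mem_filter, Finset.mem_univ, true_and] at hy ⊢
        exact hz.le.trans hy)
    have h0 : ∑ p, β p = 0 := by
      rw [hβ, Finset.card_univ, hk]
      have h4 : (Finset.univ.filter (· ∈ B)) = B := by ext; simp
      rw [h4, hBcard, sub_self]
    obtain ⟨c, hc⟩ : ∃ c, ∀ x, c ≤ t x := by
      obtain ⟨c, hc⟩ := (Set.finite_range t).bddBelow
      exact ⟨c, fun x => hc ⟨x, rfl⟩⟩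
    have := key c (fun x _ => hc x)
    rw [h0, mul_zero] at this
    have h5 : ∑ p, β p * t p = (∑ p, if p ∈ B then t p else 0) - l * ∑ p, t p := by
      rw [Finset.mul_sum, ← Finset.sum_sub_distrib]
      refine Finset.sum_congr rfl fun p _ => ?_
      simp only [β]; split_ifs <;> ring
    rw [hsum]; linarith

theorem ker_triv {ι κ : Type*} [Fintype κ] [DecidableEq κ] (W : ι → κ → ℝ) (g : κ → ι)
    (hg : (Matrix.of (W ∘ g)).det ≠ 0) (x : κ → ℝ) (h : ∀ p ∈ Set.range g, W p ⬝ᵥ x = 0) : x = 0 := by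
  apply Matrix.eq_zero_of_mulVec_eq_zero hg
  ext i
  exact h (g i) ⟨i, rfl⟩

theorem det_lower {ι κ : Type*} [Fintype ι] [DecidableEq ι] [Fintype κ] [DecidableEq κ] (W : ι → κ → ℝ) (g : κ → ι)
    (hi : Function.Injective g) (hg : (Matrix.of (W ∘ g)).det ≠ 0) (c : ι → ℝ) (hc : ∀ p, 0 < c p) :
    (Matrix.of (W ∘ g)).det^2 * ∏ i, c (g i) ≤ (G W c).det := by
  have h1 : G W c = (∑ p ∈ Finset.univ.image g, c p • vecMulVec (W p) (W p)) +
      ∑ p ∈ Finset.univ \ Finset.univ.image g, c p • vecMulVec (W p) (W p) := by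
    rw [G, add_comm, Finset.sum_sdiff (Finset.subset_univ _)]
  rw [h1]
  refine le_trans (le_of_eq ?_) (det_mono _ W c (fun p => (hc p).le) _ (posDef_sum _ W c (fun p _ => hc p) ?_))
  · rw [Finset.sum_image (fun _ _ _ _ h => hi h)]
    have := G_eq (W ∘ g) (c ∘ g)
    simp only [G, Function.comp] at this
    rw [this, det_mul, det_mul, det_transpose, det_diagonal]
    simp only [Function.comp_def]
    ring
  · intro x hx
    exact ker_triv W g hg x (fun p hp => hx p (by simpa using hp))

theorem bdd_below {ι κ : Type*} [Fintype ι] [Fintype κ] [DecidableEq κ] (W : ι → κ → ℝ) (l : ℝ)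
    (hk : l * Fintype.card ι = Fintype.card κ)
    (hr : ∀ Q : Finset ι, l * Q.card ≤ finrank ℝ (Submodule.span ℝ (W '' (Q : Set ι)))) :
    ∃ K : ℝ, ∀ t : ι → ℝ, -K ≤ Real.log (G W (fun p => Real.exp (t p))).det - l * ∑ p, t p := by
  classical
  refine ⟨∑ g : κ → ι, |Real.log ((Matrix.of (W ∘ g)).det^2)|, fun t => ?_⟩
  obtain ⟨g, hi, hg, ht⟩ := greedy W l hk hr t
  have h1 := det_lower W g hi hg (fun p => Real.exp (t p)) (fun p => Real.exp_pos _)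
  have h2 : 0 < (Matrix.of (W ∘ g)).det^2 := by positivity
  have h3 : 0 < ∏ i, Real.exp (t (g i)) := Finset.prod_pos fun i _ => Real.exp_pos _
  have h4 := Real.log_le_log (mul_pos h2 h3) h1
  rw [Real.log_mul h2.ne' h3.ne', ← Real.exp_sum, Real.log_exp] at h4
  have h5 : |Real.log ((Matrix.of (W ∘ g)).det^2)| ≤ ∑ g : κ → ι, |Real.log ((Matrix.of (W ∘ g)).det^2)| :=
    Finset.single_le_sum (f := fun g : κ → ι => |Real.log ((Matrix.of (W ∘ g)).det^2)|) (fun g _ => abs_nonneg _) (Finset.mem_univ g)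
  have := neg_abs_le (Real.log ((Matrix.of (W ∘ g)).det^2))
  linarith
end PST

namespace PST
open Module
open Matrix

theorem G_update {ι κ : Type*} [Fintype ι] [DecidableEq ι] (W : ι → κ → ℝ) (c : ι → ℝ) (p : ι) (b : ℝ) :
    G W (Function.update c p b) = G W c + (b - c p) • vecMulVec (W p) (W p) := by
  have h : ∀ q, Function.update c p b q • vecMulVec (W q) (W q) =
      c q • vecMulVec (W q) (W q) + (if q = p then (b - c p) • vecMulVec (W p) (W p) else 0) := by
    intro q
    by_cases h : q = p
    · subst h; simp [← add_smul]
    · simp [h]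
  simp only [G, h, Finset.sum_add_distrib, Finset.sum_ite_eq', Finset.mem_univ, if_true]

theorem exists_min {ι κ : Type*} [Fintype ι] [Fintype κ] [DecidableEq κ] (W : ι → κ → ℝ) (l : ℝ)
    (hl : 0 < l) (K : ℝ)
    (hpd : ∀ c : ι → ℝ, (∀ p, 0 < c p) → (G W c).PosDef)
    (hK : ∀ t : ι → ℝ, -K ≤ Real.log (G W (fun p => Real.exp (t p))).det - l * ∑ p, t p) :
    ∃ t : ι → ℝ, ∀ p, |Real.exp (t p) * (W p ⬝ᵥ ((G W (fun p => Real.exp (t p)))⁻¹ *ᵥ W p)) - l| ≤ l / 2 := by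
  classical
  let F : (ι → ℝ) → ℝ := fun t => Real.log (G W (fun p => Real.exp (t p))).det - l * ∑ p, t p
  have hdet : ∀ t : ι → ℝ, 0 < (G W (fun p => Real.exp (t p))).det := fun t =>
    (hpd _ (fun p => Real.exp_pos _)).det_pos
  have hFc : Continuous F := by
    have h1 : Continuous (fun t : ι → ℝ => (G W (fun p => Real.exp (t p))).det) := by
      apply Continuous.matrix_det
      unfold G
      fun_prop
    exact (h1.log (fun t => (hdet t).ne')).sub (by fun_prop)
  have hK0 : 0 ≤ F 0 + K := by have := hK 0; simp only [F]; linarith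
  obtain ⟨ε, hε, hε2⟩ : ∃ ε : ℝ, 0 < ε ∧ 16 * ε * (F 0 + K) ≤ l^2 := by
    refine ⟨l^2 / (16 * (F 0 + K + 1)), by positivity, ?_⟩
    rw [mul_div_assoc', div_mul_eq_mul_div, div_le_iff₀ (by positivity)]
    nlinarith [sq_nonneg l]
  let Ψ : (ι → ℝ) → ℝ := fun t => F t + ε * ∑ p, (t p)^2
  have hΨc : Continuous Ψ := by simp only [Ψ]; fun_prop
  have hΨ0 : Ψ 0 = F 0 := by simp [Ψ]
  obtain ⟨t, ht⟩ : ∃ t, ∀ y, Ψ t ≤ Ψ y := by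
    refine hΨc.exists_forall_le' 0 ?_
    have h1 := (tendsto_norm_cocompact_atTop (E := ι → ℝ)).eventually_ge_atTop (Real.sqrt ((F 0 + K)/ε))
    filter_upwards [h1] with t ht
    have h2 : ‖t‖ ≤ Real.sqrt (∑ p, (t p)^2) := by
      rw [pi_norm_le_iff_of_nonneg (Real.sqrt_nonneg _)]
      intro p
      rw [Real.norm_eq_abs]
      apply Real.abs_le_sqrt
      exact Finset.single_le_sum (f := fun p => (t p)^2) (fun p _ => sq_nonneg _) (Finset.mem_univ p)
    have h3 := (Real.sqrt_le_sqrt_iff (Finset.sum_nonneg fun p _ => sq_nonneg (t p))).1 (ht.trans h2)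
    rw [div_le_iff₀ hε] at h3
    have := hK t
    rw [hΨ0]
    simp only [Ψ]
    change F 0 ≤ F t + _
    change -K ≤ F t at this
    linarith
  refine ⟨t, fun p => ?_⟩
  set c : ι → ℝ := fun p => Real.exp (t p) with hc
  set lev := Real.exp (t p) * (W p ⬝ᵥ ((G W c)⁻¹ *ᵥ W p)) with hlev
  have hφ : ∀ h : ℝ, Ψ (Function.update t p (t p + h)) =
      Real.log ((G W c).det * (1 + (Real.exp h - 1) * lev)) - l * (∑ q, t q + h)
        + ε * (∑ q, (t q)^2 + ((t p + h)^2 - (t p)^2)) := by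
    intro h
    have e1 : (fun q => Real.exp (Function.update t p (t p + h) q)) = Function.update c p (Real.exp (t p + h)) := by
      ext q
      by_cases hq : q = p
      · subst hq; simp
      · simp [hq, hc]
    have e2 : ∑ q, Function.update t p (t p + h) q = ∑ q, t q + h := by
      rw [Finset.sum_update_of_mem (Finset.mem_univ p), ← Finset.add_sum_erase _ t (Finset.mem_univ p), Finset.sdiff_singleton_eq_erase]
      ring
    have e3 : ∑ q, (Function.update t p (t p + h) q)^2 = ∑ q, (t q)^2 + ((t p + h)^2 - (t p)^2) := by
      have : ∀ q, (Function.update t p (t p + h) q)^2 = Function.update (fun q => (t q)^2) p ((t p + h)^2) q := by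
        intro q
        by_cases hq : q = p
        · subst hq; simp
        · simp [hq]
      simp only [this]
      rw [Finset.sum_update_of_mem (Finset.mem_univ p), ← Finset.add_sum_erase _ (fun q => (t q)^2) (Finset.mem_univ p), Finset.sdiff_singleton_eq_erase]
      ring
    simp only [Ψ, F]
    rw [e1, e2, e3, G_update, det_rank1 _ (hdet t).ne'.isUnit]
    congr 5
    rw [hlev, Real.exp_add]; simp only [hc]; ring
  have hmin : IsLocalMin (fun h : ℝ => Real.log ((G W c).det * (1 + (Real.exp h - 1) * lev)) - l * (∑ q, t q + h)
        + ε * (∑ q, (t q)^2 + ((t p + h)^2 - (t p)^2))) 0 := by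
    refine Filter.Eventually.of_forall fun h => ?_
    beta_reduce
    rw [← hφ, ← hφ]
    rw [add_zero, Function.update_eq_self]
    exact ht _
  have hd : HasDerivAt (fun h : ℝ => Real.log ((G W c).det * (1 + (Real.exp h - 1) * lev)) - l * (∑ q, t q + h)
        + ε * (∑ q, (t q)^2 + ((t p + h)^2 - (t p)^2))) (lev - l + ε * (2 * t p)) 0 := by
    have d1 : HasDerivAt (fun h : ℝ => (G W c).det * (1 + (Real.exp h - 1) * lev)) ((G W c).det * lev) 0 := by
      have := ((((Real.hasDerivAt_exp 0).sub_const 1).mul_const lev).const_add 1).const_mul (G W c).det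
      simpa using this
    have d2 := d1.log (by simpa using (hdet t).ne')
    have d3 : HasDerivAt (fun h : ℝ => l * (∑ q, t q + h)) l 0 := by
      simpa using ((hasDerivAt_id (0:ℝ)).const_add (∑ q, t q)).const_mul l
    have d4 : HasDerivAt (fun h : ℝ => ε * (∑ q, (t q)^2 + ((t p + h)^2 - (t p)^2))) (ε * (2 * t p)) 0 := by
      have := (((((hasDerivAt_id (0:ℝ)).const_add (t p)).pow 2).sub_const ((t p)^2)).const_add (∑ q, (t q)^2)).const_mul ε
      simpa using this
    have hne := (hdet t).ne'
    have e : (G W c).det * lev / ((G W c).det * (1 + (Real.exp 0 - 1) * lev)) = lev := by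
      rw [Real.exp_zero, sub_self, zero_mul, add_zero, mul_one]
      exact mul_div_cancel_left₀ _ hne
    rw [e] at d2
    exact (d2.sub d3).add d4
  have h0 := hmin.hasDerivAt_eq_zero hd
  have h1 : lev - l = - (ε * (2 * t p)) := by linarith
  rw [h1, abs_neg]
  apply abs_le_of_sq_le_sq _ (by positivity)
  have h2 : ε * (t p)^2 ≤ F 0 + K := by
    have a1 := ht 0
    rw [hΨ0] at a1
    have a2 : -K ≤ F t := hK t
    have a3 : (t p)^2 ≤ ∑ q, (t q)^2 :=
      Finset.single_le_sum (f := fun p => (t p)^2) (fun p _ => sq_nonneg _) (Finset.mem_univ p)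
    have a4 : Ψ t = F t + ε * ∑ q, (t q)^2 := rfl
    nlinarith
  have h3 : 16 * ε * (ε * (t p)^2) ≤ 16 * ε * (F 0 + K) := by gcongr
  nlinarith

theorem scaling {ι κ : Type*} [Fintype ι] [DecidableEq ι] [Fintype κ] [DecidableEq κ] (W : ι → κ → ℝ) (l : ℝ)
    (hl : 0 < l)
    (hk : l * Fintype.card ι = Fintype.card κ)
    (hr : ∀ Q : Finset ι, l * Q.card ≤ finrank ℝ (Submodule.span ℝ (W '' (Q : Set ι)))) :
    ∃ A : Matrix ι ι ℝ, Aᵀ = A ∧ A * A = A ∧ (∀ p, l / 2 ≤ A p p ∧ A p p ≤ 2 * l) ∧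
      ∀ Q : Finset ι, (A.submatrix (Subtype.val : Q → ι) (Subtype.val : Q → ι)).rank ≤
        finrank ℝ (Submodule.span ℝ (W '' (Q : Set ι))) := by
  obtain ⟨K, hK⟩ := bdd_below W l hk hr
  obtain ⟨g, -, hg, -⟩ := greedy W l hk hr 0
  have hpd : ∀ c : ι → ℝ, (∀ p, 0 < c p) → (G W c).PosDef := fun c hc =>
    posDef_sum _ W c (fun p _ => hc p) (fun x hx => ker_triv W g hg x (fun p _ => hx p (Finset.mem_univ _)))
  obtain ⟨t, ht⟩ := exists_min W l hl K hpd hK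
  set c : ι → ℝ := fun p => Real.exp (t p) with hc
  set Mt := G W c with hM
  have hMpd : Mt.PosDef := hpd c (fun p => Real.exp_pos _)
  have hMs : Mtᵀ = Mt := by
    have := hMpd.isHermitian
    rwa [Matrix.IsHermitian, Matrix.conjTranspose_eq_transpose_of_trivial] at this
  have hMi : Mt⁻¹ * Mt = 1 := nonsing_inv_mul _ hMpd.det_pos.ne'.isUnit
  let r : ι → ℝ := fun p => Real.sqrt (c p)
  have hrr : diagonal r * diagonal r = diagonal c := by
    rw [diagonal_mul_diagonal]
    congr 1
    ext p
    exact Real.mul_self_sqrt (Real.exp_pos _).le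
  obtain ⟨V, hV⟩ : ∃ V : Matrix ι κ ℝ, V = diagonal r * Matrix.of W := ⟨_, rfl⟩
  have hVa : ∀ p i, V p i = r p * W p i := by
    intro p i
    rw [hV, diagonal_mul, of_apply]
  have hVV : Vᵀ * V = Mt := by
    rw [hM, G_eq, ← hrr]
    simp only [hV, transpose_mul, diagonal_transpose, Matrix.mul_assoc]
  refine ⟨V * Mt⁻¹ * Vᵀ, ?_, ?_, ?_, ?_⟩
  · rw [transpose_mul, transpose_mul, transpose_transpose, transpose_nonsing_inv, hMs, Matrix.mul_assoc]
  · calc V * Mt⁻¹ * Vᵀ * (V * Mt⁻¹ * Vᵀ) = V * (Mt⁻¹ * (Vᵀ * V)) * Mt⁻¹ * Vᵀ := by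
          simp only [Matrix.mul_assoc]
      _ = V * Mt⁻¹ * Vᵀ := by rw [hVV, hMi, Matrix.mul_one]
  · intro p
    have h1 : (V * Mt⁻¹ * Vᵀ) p p = Real.exp (t p) * (W p ⬝ᵥ (Mt⁻¹ *ᵥ W p)) := by
      have e : Real.exp (t p) = r p * r p := (Real.mul_self_sqrt (Real.exp_pos _).le).symm
      rw [e, Matrix.mul_assoc]
      simp only [hVa, Matrix.mul_apply, transpose_apply, dotProduct, mulVec, Finset.mul_sum]
      exact Finset.sum_congr rfl fun i _ => Finset.sum_congr rfl fun j _ => by ring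
    rw [h1]
    have := abs_le.1 (ht p)
    constructor <;> linarith [this.1, this.2]
  · intro Q
    have h1 : (V * Mt⁻¹ * Vᵀ).submatrix (Subtype.val : Q → ι) (Subtype.val : Q → ι) =
        (diagonal (fun q : Q => r q) * (Matrix.of (fun q : Q => W q))) * (Mt⁻¹ * (Vᵀ.submatrix id (Subtype.val : Q → ι))) := by
      have h2 : diagonal (fun q : Q => r q) * (Matrix.of (fun q : Q => W q)) = V.submatrix (Subtype.val : Q → ι) id := by
        ext q i
        simp [hVa, diagonal_mul]
      rw [h2, Matrix.mul_assoc]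
      ext q q'
      simp [Matrix.mul_apply]
    rw [h1]
    refine (rank_mul_le_left _ _).trans ((rank_mul_le_right _ _).trans ?_)
    rw [rank_eq_finrank_span_row]
    have : Set.range (Matrix.of (fun q : Q => W q)).row = W '' (Q : Set ι) := by
      ext x
      simp only [Set.mem_range, Set.mem_image, Finset.mem_coe]
      constructor
      · rintro ⟨i, rfl⟩; exact ⟨i, i.2, rfl⟩
      · rintro ⟨p, hp, rfl⟩; exact ⟨⟨p, hp⟩, rfl⟩
    rw [this]
end PST

namespace PST
open Module
open Matrix

def dist3 {ι : Type*} (z : ι × ι × ι) : Prop := z.1 ≠ z.2.1 ∧ z.2.1 ≠ z.2.2 ∧ z.1 ≠ z.2.2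

open Classical in
theorem triple_lower {ι : Type*} [Fintype ι] (A : Matrix ι ι ℝ) (hs : Aᵀ = A)
    (l : ℝ) (hl : 0 < l) (hA : ∀ p q, (A p q)^2 ≤ 4 * l^2) (hd : ∀ p, l / 2 ≤ A p p)
    (Q : Finset ι) (h : ℕ) (hh : (A.submatrix (Subtype.val : Q → ι) (Subtype.val : Q → ι)).rank ≤ h)
    (hQ : 96 * h ≤ Q.card) :
    l^4 * (Q.card : ℝ)^3 / (32 * (h:ℝ)^2) ≤
      ∑ z ∈ (Q ×ˢ (Q ×ˢ Q)) with dist3 z, (A z.1 z.2.1)^2 * (A z.2.1 z.2.2)^2 := by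
  set a : ι → ι → ℝ := fun p q => (A p q)^2 with ha
  have ha0 : ∀ p q, 0 ≤ a p q := fun p q => sq_nonneg _
  have hasym : ∀ p q, a p q = a q p := by
    intro p q
    simp only [ha]
    have : A p q = A q p := congrFun (congrFun hs q) p
    rw [this]
  set D := ∑ z ∈ (Q ×ˢ (Q ×ˢ Q)) with dist3 z, (A z.1 z.2.1)^2 * (A z.2.1 z.2.2)^2 with hD
  have hD0 : 0 ≤ D := Finset.sum_nonneg fun z _ => mul_nonneg (sq_nonneg _) (sq_nonneg _)
  rcases Nat.eq_zero_or_pos h with rfl | hpos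
  · simpa using hD0
  have hh0 : (0:ℝ) < h := by exact_mod_cast hpos
  set x : ℝ := (Q.card : ℝ) with hx
  have hx0 : 0 < x := by
    rw [hx]; exact_mod_cast (by omega : 0 < Q.card)
  have hxh : 96 * (h:ℝ) ≤ x := by rw [hx]; exact_mod_cast hQ
  set E := ∑ q ∈ Q, ∑ p ∈ Q, a p q with hE
  set T := ∑ q ∈ Q, (∑ p ∈ Q, a p q)^2 with hT
  have h1 : (l * x / 2)^2 ≤ h * E := by
    have t := trace_sq_le (A.submatrix (Subtype.val : Q → ι) (Subtype.val : Q → ι)) (by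
      rw [transpose_submatrix, hs])
    have e1 : ∑ i : Q, (A.submatrix (Subtype.val : Q → ι) (Subtype.val : Q → ι)) i i = ∑ p ∈ Q, A p p :=
      Finset.sum_coe_sort Q (fun p => A p p)
    have e2 : ∑ i : Q, ∑ j : Q, ((A.submatrix (Subtype.val : Q → ι) (Subtype.val : Q → ι)) i j)^2 = E := by
      rw [hE, ← Finset.sum_coe_sort Q]
      refine Finset.sum_congr rfl fun i _ => ?_
      rw [← Finset.sum_coe_sort Q]
      exact Finset.sum_congr rfl fun j _ => hasym _ _
    rw [e1, e2] at t
    have e3 : l * x / 2 ≤ ∑ p ∈ Q, A p p := by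
      have : ∑ p ∈ Q, l / 2 ≤ ∑ p ∈ Q, A p p := Finset.sum_le_sum fun p _ => hd p
      rw [Finset.sum_const, nsmul_eq_mul] at this
      rw [hx]; linarith
    have hE0 : 0 ≤ E := Finset.sum_nonneg fun q _ => Finset.sum_nonneg fun p _ => ha0 p q
    have e4 : (l * x / 2)^2 ≤ (∑ p ∈ Q, A p p)^2 := by
      apply pow_le_pow_left₀ (by positivity) e3
    refine e4.trans (t.trans ?_)
    gcongr
  have h2 : E^2 ≤ x * T := sq_sum_le_card_mul_sum_sq
  have h3 : T ≤ D + 12 * l^2 * E := by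
    have e1 : T = ∑ z ∈ Q ×ˢ (Q ×ˢ Q), a z.1 z.2.1 * a z.2.1 z.2.2 := by
      rw [hT, Finset.sum_product]
      simp only [Finset.sum_product]
      rw [Finset.sum_comm]
      refine Finset.sum_congr rfl fun q _ => ?_
      rw [sq, Finset.sum_mul_sum]
      refine Finset.sum_congr rfl fun p _ => Finset.sum_congr rfl fun r _ => ?_
      rw [hasym r q]
    have e2 : ∀ z : ι × ι × ι, a z.1 z.2.1 * a z.2.1 z.2.2 ≤
        (if dist3 z then a z.1 z.2.1 * a z.2.1 z.2.2 else 0) +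
        ((if z.1 = z.2.1 then 4 * l^2 * a z.2.2 z.2.1 else 0) + (if z.2.1 = z.2.2 then 4 * l^2 * a z.1 z.2.1 else 0)
          + (if z.1 = z.2.2 then 4 * l^2 * a z.1 z.2.1 else 0)) := by
      rintro ⟨p, q, r⟩
      dsimp only
      have k1 : a p q * a q r ≤ 4 * l^2 * a r q := by
        rw [hasym r q]; exact mul_le_mul_of_nonneg_right (hA _ _) (ha0 _ _)
      have k2 : a p q * a q r ≤ 4 * l^2 * a p q := by
        rw [mul_comm]; exact mul_le_mul_of_nonneg_right (hA _ _) (ha0 _ _)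
      have k3 : ∀ u v, 0 ≤ 4 * l^2 * a u v := fun u v => mul_nonneg (by positivity) (ha0 _ _)
      by_cases c1 : p = q
      · rw [if_neg (fun hz : dist3 (p, q, r) => hz.1 c1), if_pos c1]
        have : 0 ≤ (if q = r then 4 * l^2 * a p q else 0) := by split_ifs; exacts [k3 _ _, le_rfl]
        have : 0 ≤ (if p = r then 4 * l^2 * a p q else 0) := by split_ifs; exacts [k3 _ _, le_rfl]
        linarith
      · by_cases c2 : q = r
        · rw [if_neg (fun hz : dist3 (p, q, r) => hz.2.1 c2), if_neg c1, if_pos c2]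
          have : 0 ≤ (if p = r then 4 * l^2 * a p q else 0) := by split_ifs; exacts [k3 _ _, le_rfl]
          linarith
        · by_cases c3 : p = r
          · rw [if_neg (fun hz : dist3 (p, q, r) => hz.2.2 c3), if_neg c1, if_neg c2, if_pos c3]
            linarith
          · rw [if_pos (show dist3 (p, q, r) from ⟨c1, c2, c3⟩), if_neg c1, if_neg c2, if_neg c3]
            linarith
    have e3 := Finset.sum_le_sum (s := Q ×ˢ (Q ×ˢ Q)) fun z _ => e2 z
    rw [← e1, Finset.sum_add_distrib, Finset.sum_add_distrib, Finset.sum_add_distrib, ← Finset.sum_filter] at e3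
    have f1 : ∑ z ∈ Q ×ˢ (Q ×ˢ Q), (if z.1 = z.2.1 then 4 * l^2 * a z.2.2 z.2.1 else 0) = 4 * l^2 * E := by
      rw [Finset.sum_product, Finset.sum_comm, Finset.sum_product, hE, Finset.mul_sum]
      refine Finset.sum_congr rfl fun q hq => ?_
      rw [Finset.mul_sum]
      refine Finset.sum_congr rfl fun r _ => ?_
      simp [hq]
    have f2 : ∑ z ∈ Q ×ˢ (Q ×ˢ Q), (if z.2.1 = z.2.2 then 4 * l^2 * a z.1 z.2.1 else 0) = 4 * l^2 * E := by
      rw [Finset.sum_product, hE, Finset.sum_comm (s := Q) (t := Q), Finset.mul_sum]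
      refine Finset.sum_congr rfl fun p hp => ?_
      rw [Finset.mul_sum, Finset.sum_product]
      refine Finset.sum_congr rfl fun q hq => ?_
      simp [hq]
    have f3 : ∑ z ∈ Q ×ˢ (Q ×ˢ Q), (if z.1 = z.2.2 then 4 * l^2 * a z.1 z.2.1 else 0) = 4 * l^2 * E := by
      rw [Finset.sum_product, hE, Finset.sum_comm (s := Q) (t := Q), Finset.mul_sum]
      refine Finset.sum_congr rfl fun p hp => ?_
      rw [Finset.mul_sum, Finset.sum_product]
      refine Finset.sum_congr rfl fun q hq => ?_
      simp [hp]
    rw [f1, f2, f3] at e3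
    linarith
  have hE1 : l^2 * x^2 / (4 * h) ≤ E := by
    rw [div_le_iff₀ (by positivity)]; nlinarith
  have hEpos : 0 < E := lt_of_lt_of_le (by positivity) hE1
  have h5 : E^2 / x ≤ T := by rw [div_le_iff₀ hx0]; linarith
  have h6 : 24 * l^2 * E ≤ T := by
    refine le_trans ?_ h5
    rw [le_div_iff₀ hx0]
    have : 24 * l^2 * x ≤ E := by
      refine le_trans ?_ hE1
      rw [le_div_iff₀ (by positivity)]
      have : l^2 * x * (96 * h) ≤ l^2 * x * x := by gcongr
      nlinarith
    nlinarith
  have h7 : T / 2 ≤ D := by linarith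
  refine le_trans ?_ h7
  have h8 : (l^2 * x^2 / (4 * h))^2 / x ≤ T := by
    refine le_trans ?_ h5
    gcongr
  have h9 : (l^2 * x^2 / (4 * h))^2 / x = 2 * (l^4 * x^3 / (32 * h^2)) := by
    field_simp; norm_num
  rw [h9] at h8
  linarith

open Classical in
theorem triple_sum {ι σ : Type*} [Fintype ι] (A : Matrix ι ι ℝ) (hs : Aᵀ = A) (hid : A * A = A)
    (l : ℝ) (hl : 0 < l) (hd : ∀ p, l / 2 ≤ A p p ∧ A p p ≤ 2 * l) (T : Finset σ)
    (Q : σ → Finset ι) (h : σ → ℕ)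
    (hh : ∀ s ∈ T, (A.submatrix (Subtype.val : Q s → ι) (Subtype.val : Q s → ι)).rank ≤ h s)
    (hQ : ∀ s ∈ T, 96 * h s ≤ (Q s).card) (M : ℕ)
    (hM : ∀ p q r : ι, p ≠ q → q ≠ r → p ≠ r → (T.filter (fun s => p ∈ Q s ∧ q ∈ Q s ∧ r ∈ Q s)).card ≤ M) :
    ∑ s ∈ T, l^2 * ((Q s).card : ℝ)^3 / (h s:ℝ)^2 ≤ 128 * M * Fintype.card ι := by
  have hsum : ∀ p q, ∑ r, A p r * A q r = A p q := by
    intro p q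
    conv_rhs => rw [← hid, Matrix.mul_apply]
    refine Finset.sum_congr rfl fun r _ => ?_
    rw [show A q r = A r q from congrFun (congrFun hs r) q]
  have hA : ∀ p q, (A p q)^2 ≤ 4 * l^2 := by
    intro p q
    have := Finset.sum_mul_sq_le_sq_mul_sq Finset.univ (fun r => A p r) (fun r => A q r)
    rw [hsum] at this
    have e : ∀ p, ∑ r, (A p r)^2 = A p p := by
      intro p; rw [← hsum p p]; simp [sq]
    rw [e, e] at this
    have := hd p
    have := hd q
    nlinarith
  have h1 : ∑ s ∈ T, l^4 * ((Q s).card : ℝ)^3 / (32 * (h s:ℝ)^2) ≤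
      ∑ s ∈ T, ∑ z ∈ (Q s ×ˢ (Q s ×ˢ Q s)) with dist3 z, (A z.1 z.2.1)^2 * (A z.2.1 z.2.2)^2 :=
    Finset.sum_le_sum fun s hs' => triple_lower A hs l hl hA (fun p => (hd p).1) (Q s) (h s) (hh s hs') (hQ s hs')
  have h2 : ∑ s ∈ T, ∑ z ∈ (Q s ×ˢ (Q s ×ˢ Q s)) with dist3 z, (A z.1 z.2.1)^2 * (A z.2.1 z.2.2)^2 =
      ∑ z : ι × ι × ι with dist3 z, ∑ s ∈ T with (z.1 ∈ Q s ∧ z.2.1 ∈ Q s ∧ z.2.2 ∈ Q s), (A z.1 z.2.1)^2 * (A z.2.1 z.2.2)^2 := by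
    apply Finset.sum_comm'
    intro s z
    simp only [Finset.mem_filter, Finset.mem_product, Finset.mem_univ, true_and]
    tauto
  have h3 : ∑ z : ι × ι × ι with dist3 z, ∑ s ∈ T with (z.1 ∈ Q s ∧ z.2.1 ∈ Q s ∧ z.2.2 ∈ Q s), (A z.1 z.2.1)^2 * (A z.2.1 z.2.2)^2
      ≤ ∑ z : ι × ι × ι, M * ((A z.1 z.2.1)^2 * (A z.2.1 z.2.2)^2) := by
    refine (Finset.sum_le_sum (fun z hz => ?_)).trans (Finset.sum_le_sum_of_subset_of_nonneg (Finset.filter_subset _ _) (fun z _ _ => by positivity))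
    rw [Finset.sum_const, nsmul_eq_mul]
    obtain ⟨z1, z2, z3⟩ := (Finset.mem_filter.1 hz).2
    have := hM _ _ _ z1 z2 z3
    gcongr
  have h4 : ∑ z : ι × ι × ι, M * ((A z.1 z.2.1)^2 * (A z.2.1 z.2.2)^2) = M * ∑ q, (A q q)^2 := by
    rw [← Finset.mul_sum, Fintype.sum_prod_type]
    simp only [Fintype.sum_prod_type]
    rw [Finset.sum_comm]
    congr 1
    refine Finset.sum_congr rfl fun q _ => ?_
    rw [sq (A q q), ← hsum q q, Finset.sum_mul_sum]
    refine Finset.sum_congr rfl fun p _ => Finset.sum_congr rfl fun r _ => ?_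
    rw [show A p q = A q p from congrFun (congrFun hs q) p]; ring
  have h5 : ∑ q, (A q q)^2 ≤ Fintype.card ι * (4 * l^2) := by
    have := Finset.sum_le_sum (s := Finset.univ) fun q (_ : q ∈ Finset.univ) => hA q q
    rwa [Finset.sum_const, nsmul_eq_mul, Finset.card_univ] at this
  have h6 : ∑ s ∈ T, l^4 * ((Q s).card : ℝ)^3 / (32 * (h s:ℝ)^2) = (l^2/32) * ∑ s ∈ T, l^2 * ((Q s).card : ℝ)^3 / (h s:ℝ)^2 := by
    rw [Finset.mul_sum]
    refine Finset.sum_congr rfl fun s _ => ?_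
    rw [div_mul_div_comm]; ring
  have h7 : (l^2/32) * ∑ s ∈ T, l^2 * ((Q s).card : ℝ)^3 / (h s:ℝ)^2 ≤ (l^2/32) * (128 * M * Fintype.card ι) := by
    rw [← h6]
    refine h1.trans (h2.le.trans (h3.trans (h4.le.trans ?_)))
    calc (M:ℝ) * ∑ q, (A q q)^2 ≤ M * (Fintype.card ι * (4 * l^2)) := by gcongr
      _ = _ := by ring
  exact le_of_mul_le_mul_left h7 (by positivity)
end PST

namespace PST
open Module

abbrev X5 := Fin 5 → ℝ

abbrev sg (i : Fin 5) (k : ℕ) : Fin 5 → ℕ := Pi.single i k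

def mon (e : Fin 5 → ℕ) : X5 → ℝ := fun x => ∏ i, x i ^ e i

def ind (Q : Set X5) : (X5 → ℝ) →ₗ[ℝ] (X5 → ℝ) where
  toFun f := Q.indicator f
  map_add' f g := Set.indicator_add _ _ _
  map_smul' c f := by
    ext x
    by_cases h : x ∈ Q <;> simp [h]

def mulBy (g : X5 → ℝ) : (X5 → ℝ) →ₗ[ℝ] (X5 → ℝ) := LinearMap.mulLeft ℝ g

def mons (D : ℕ) : Finset (Fin 5 → ℕ) := Finset.Nat.antidiagonalTuple 5 D

theorem mem_mons (D : ℕ) (e : Fin 5 → ℕ) : e ∈ mons D ↔ ∑ i, e i = D :=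
  Finset.Nat.mem_antidiagonalTuple

def VD (D : ℕ) (Q : Set X5) : Submodule ℝ (X5 → ℝ) :=
  Submodule.span ℝ ((fun e => ind Q (mon e)) '' (mons D : Set (Fin 5 → ℕ)))

instance (D : ℕ) (Q : Set X5) : FiniteDimensional ℝ (VD D Q) :=
  FiniteDimensional.span_of_finite ℝ ((Finset.finite_toSet _).image _)

def H (D : ℕ) (Q : Set X5) : ℕ := finrank ℝ (VD D Q)

def Std (D : ℕ) (Q : Set X5) : Set (Fin 5 → ℕ) :=
  {e | e ∈ mons D ∧ ind Q (mon e) ∉ Submodule.span ℝ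
    ((fun e => ind Q (mon e)) '' {e' | e' ∈ mons D ∧ toLex e' < toLex e})}

theorem H_eq (D : ℕ) (Q : Set X5) : H D Q = (Std D Q).ncard :=
  span_count (toLex : (Fin 5 → ℕ) → Lex (Fin 5 → ℕ)) toLex.injective (fun e => ind Q (mon e)) (mons D)

theorem Std_fin (D : ℕ) (Q : Set X5) : (Std D Q).Finite :=
  (mons D).finite_toSet.subset fun _ h => h.1

theorem ind_ind (P Q : Set X5) (f : X5 → ℝ) : ind P (ind Q f) = ind (P ∩ Q) f := by
  simp [ind, Set.indicator_indicator]

theorem mul_ind (Q : Set X5) (g f : X5 → ℝ) : mulBy g (ind Q f) = ind Q (g * f) := by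
  ext x
  simp only [mulBy, ind, LinearMap.mulLeft_apply, LinearMap.coe_mk, AddHom.coe_mk, Pi.mul_apply]
  by_cases h : x ∈ Q <;> simp [h]

theorem mon_add (e e' : Fin 5 → ℕ) : mon (e + e') = mon e * mon e' := by
  ext x
  simp [mon, pow_add, Finset.prod_mul_distrib]

theorem mon_single (i : Fin 5) (k : ℕ) : mon (sg i k) = fun x => x i ^ k := by
  ext x
  simp only [mon]
  rw [Finset.prod_eq_single i]
  · simp
  · intro j _ hj; simp [hj]
  · simp

theorem sum_add_single (e : Fin 5 → ℕ) (i : Fin 5) (k : ℕ) : ∑ j, (e + sg i k) j = ∑ j, e j + k := by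
  simp [Finset.sum_add_distrib, Finset.sum_pi_single']

theorem Std_down (D : ℕ) (Q : Set X5) (e : Fin 5 → ℕ) (i : Fin 5)
    (h : e + sg i 1 ∈ Std (D+1) Q) : e ∈ Std D Q := by
  obtain ⟨h1, h2⟩ := h
  rw [mem_mons, sum_add_single] at h1
  refine ⟨(mem_mons _ _).2 (by omega), fun h3 => h2 ?_⟩
  have h4 := Submodule.mem_map_of_mem (f := mulBy (mon (sg i 1))) h3
  rw [Submodule.map_span, mul_ind, mul_comm, ← mon_add] at h4
  refine Submodule.span_mono ?_ h4
  rintro _ ⟨_, ⟨e', ⟨he1, he2⟩, rfl⟩, rfl⟩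
  refine ⟨e' + sg i 1, ⟨?_, ?_⟩, ?_⟩
  · rw [mem_mons] at he1 ⊢; rw [sum_add_single, he1]
  · have := add_lt_add_left he2 (toLex (sg i 1 : Fin 5 → ℕ))
    exact this
  · simp only [mul_ind, mon_add, mul_comm]

theorem macaulay (D : ℕ) (Q : Set X5) : (D+1) * H (D+1) Q ≤ (D+5) * H D Q := by
  classical
  obtain ⟨S1, hS1⟩ : ∃ S : Finset (Fin 5 → ℕ), (S : Set _) = Std (D+1) Q := ⟨(Std_fin _ _).toFinset, Set.Finite.coe_toFinset _⟩
  obtain ⟨S0, hS0⟩ : ∃ S : Finset (Fin 5 → ℕ), (S : Set _) = Std D Q := ⟨(Std_fin _ _).toFinset, Set.Finite.coe_toFinset _⟩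
  rw [H_eq, H_eq, ← hS1, ← hS0, Set.ncard_coe_finset, Set.ncard_coe_finset]
  have h1 : ∑ e ∈ S1, ∑ i, e i = S1.card * (D+1) := by
    rw [Finset.sum_congr rfl (g := fun _ => D+1), Finset.sum_const, smul_eq_mul]
    intro e he
    have : e ∈ Std (D+1) Q := by rw [← hS1]; exact he
    exact (mem_mons _ _).1 this.1
  have h0 : ∑ e ∈ S0, ∑ i, (e i + 1) = S0.card * (D+5) := by
    rw [Finset.sum_congr rfl (g := fun _ => D+5), Finset.sum_const, smul_eq_mul]
    intro e he
    have : e ∈ Std D Q := by rw [← hS0]; exact he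
    rw [Finset.sum_add_distrib, (mem_mons _ _).1 this.1]; simp
  rw [mul_comm, ← h1, mul_comm, ← h0, Finset.sum_comm, Finset.sum_comm (s := S0)]
  refine Finset.sum_le_sum fun i _ => ?_
  have hinj : Set.InjOn (fun e : Fin 5 → ℕ => e + sg i 1) (S0 : Set (Fin 5 → ℕ)) := fun a _ b _ h => add_right_cancel h
  have h2 : ∑ e ∈ S0, (e i + 1) = ∑ e ∈ S0.image (fun e : Fin 5 → ℕ => e + sg i 1), e i := by
    rw [Finset.sum_image hinj]
    simp
  rw [h2, ← Finset.sum_filter_ne_zero]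
  refine Finset.sum_le_sum_of_subset ?_
  intro e he
  obtain ⟨he1, he2⟩ := Finset.mem_filter.1 he
  have hs : e - sg i 1 + sg i 1 = e := by
    ext j
    by_cases hj : j = i
    · subst hj; simp; omega
    · simp [hj]
  refine Finset.mem_image.2 ⟨e - sg i 1, ?_, hs⟩
  have h3 : e ∈ Std (D+1) Q := by rw [← hS1]; exact he1
  rw [← hs] at h3
  have := Std_down _ _ _ _ h3
  rw [← hS0] at this; exact this

theorem Std_le_one (D : ℕ) (Q : Set X5) (hQ : ∀ x ∈ Q, x 0 ^ 2 = x 4 ^ 2 - x 1 ^ 2 - x 2 ^ 2)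
    (e : Fin 5 → ℕ) (he : e ∈ Std D Q) : e 0 ≤ 1 := by
  by_contra hc
  push Not at hc
  obtain ⟨h1, h2⟩ := he
  obtain ⟨e0, rfl⟩ : ∃ e0, e = e0 + sg 0 2 := by
    refine ⟨e - sg 0 2, ?_⟩
    ext j
    by_cases hj : j = 0
    · subst hj; simp; omega
    · simp [hj]
  apply h2
  rw [mem_mons, sum_add_single] at h1
  have hm : ∀ j : Fin 5, j ≠ 0 → ind Q (mon (e0 + sg j 2)) ∈ Submodule.span ℝ
    ((fun e => ind Q (mon e)) '' {e' | e' ∈ mons D ∧ toLex e' < toLex (e0 + sg 0 2)}) := by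
    intro j hj
    refine Submodule.subset_span ⟨_, ⟨?_, ?_⟩, rfl⟩
    · rw [mem_mons, sum_add_single, h1]
    · refine ⟨0, fun k hk => absurd hk (Fin.not_lt_zero k), ?_⟩
      simp [Ne.symm hj]
  have h3 : ind Q (mon (e0 + sg 0 2)) = ind Q (mon (e0 + sg 4 2)) - ind Q (mon (e0 + sg 1 2))
      - ind Q (mon (e0 + sg 2 2)) := by
    ext x
    simp only [ind, LinearMap.coe_mk, AddHom.coe_mk, Pi.sub_apply]
    by_cases hx : x ∈ Q
    · simp only [Set.indicator_of_mem hx, mon_add, mon_single, Pi.mul_apply, hQ x hx]; ring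
    · simp [hx]
  rw [h3]
  exact Submodule.sub_mem _ (Submodule.sub_mem _ (hm 4 (by decide)) (hm 1 (by decide))) (hm 2 (by decide))

theorem H_bound (D : ℕ) (hD : 1 ≤ D) (Q : Set X5) (hQ : ∀ x ∈ Q, x 0 ^ 2 = x 4 ^ 2 - x 1 ^ 2 - x 2 ^ 2) :
    H D Q ≤ 16 * D^3 := by
  rw [H_eq]
  have h1 : (Std D Q).ncard ≤ ((Finset.range 2 ×ˢ (Finset.range (D+1) ×ˢ (Finset.range (D+1) ×ˢ Finset.range (D+1))) : Finset _) : Set (ℕ × ℕ × ℕ × ℕ)).ncard := by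
    refine Set.ncard_le_ncard_of_injOn (fun e : Fin 5 → ℕ => (e 0, e 1, e 2, e 3)) ?_ ?_ (Finset.finite_toSet _)
    · intro e he
      have h0 := Std_le_one D Q hQ e he
      have h2 := (mem_mons _ _).1 he.1
      simp only [Fin.sum_univ_five] at h2
      simp only [Finset.coe_product, Finset.coe_range, Set.mem_prod, Set.mem_Iio]
      omega
    · intro e he e' he' h
      have h2 := (mem_mons _ _).1 he.1
      have h2' := (mem_mons _ _).1 he'.1
      simp only [Fin.sum_univ_five] at h2 h2'
      simp only [Prod.mk.injEq] at h
      obtain ⟨a0, a1, a2, a3⟩ := h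
      ext j
      fin_cases j
      · exact a0
      · exact a1
      · exact a2
      · exact a3
      · change e 4 = e' 4; omega
  rw [Set.ncard_coe_finset] at h1
  simp only [Finset.card_product, Finset.card_range] at h1
  refine h1.trans ?_
  have : D + 1 ≤ 2 * D := by omega
  calc 2 * ((D+1) * ((D+1)*(D+1))) ≤ 2 * ((2*D) * ((2*D)*(2*D))) := by gcongr
    _ = 16 * D^3 := by ring

def lin (a : Fin 5 → ℝ) : X5 → ℝ := fun x => ∑ i, a i * x i

theorem lin_eq (a : Fin 5 → ℝ) : lin a = ∑ i, a i • mon (sg i 1) := by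
  ext x
  simp [lin, mon_single]

theorem H_split (D : ℕ) (Q : Set X5) (a : Fin 5 → ℝ) :
    H (D+1) (Q ∩ {x | lin a x = 0}) + H D (Q \ {x | lin a x = 0}) ≤ H (D+1) Q := by
  set s := {x | lin a x = 0} with hs
  let R := (ind s).domRestrict (VD (D+1) Q)
  have h1 := LinearMap.finrank_range_add_finrank_ker R
  have h2 : LinearMap.range R = VD (D+1) (Q ∩ s) := by
    rw [LinearMap.range_domRestrict, VD, VD, Submodule.map_span, ← Set.image_comp]
    congr 1
    apply Set.image_congr
    intro e _
    simp only [Function.comp, ind_ind, Set.inter_comm]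
  rw [h2] at h1
  have h3 : finrank ℝ (VD D (Q \ s)) ≤ finrank ℝ (LinearMap.ker R) := by
    have key : ∀ f ∈ VD D (Q \ s), mulBy (lin a) f ∈ VD (D+1) Q ∧ ind s (mulBy (lin a) f) = 0 ∧ ind (Q \ s) f = f := by
      intro f hf
      induction hf using Submodule.span_induction with
      | mem f hf =>
        obtain ⟨e, he, rfl⟩ := hf
        refine ⟨?_, ?_, ?_⟩
        · have : mulBy (lin a) (ind (Q \ s) (mon e)) = ∑ i, a i • ind Q (mon (e + sg i 1)) := by
            have e1 : ∑ i, a i • ind Q (mon (e + sg i 1)) = ind Q (lin a * mon e) := by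
              rw [lin_eq, Finset.sum_mul, map_sum]
              refine Finset.sum_congr rfl fun i _ => ?_
              rw [smul_mul_assoc, map_smul, mon_add, mul_comm]
            rw [e1]
            simp only [mul_ind]
            ext x
            simp only [ind, LinearMap.coe_mk, AddHom.coe_mk]
            by_cases hx : x ∈ Q
            · by_cases hx2 : x ∈ s
              · have : lin a x = 0 := hx2
                simp [hx, hx2, this]
              · simp [hx, hx2]
            · simp [hx]
          simp only [this]
          refine Submodule.sum_mem _ fun i _ => Submodule.smul_mem _ _ (Submodule.subset_span ⟨_, ?_, rfl⟩)
          rw [Finset.mem_coe, mem_mons] at he ⊢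
          rw [sum_add_single, he]
        · simp only [mul_ind, ind_ind]
          have : s ∩ (Q \ s) = ∅ := by ext; simp
          rw [this]; ext x; simp [ind]
        · simp only [ind_ind, Set.inter_self]
      | zero => simp
      | add f g _ _ hf hg =>
        refine ⟨?_, ?_, ?_⟩
        · rw [map_add]; exact Submodule.add_mem _ hf.1 hg.1
        · rw [map_add, map_add, hf.2.1, hg.2.1, add_zero]
        · rw [map_add, hf.2.2, hg.2.2]
      | smul c f _ hf =>
        refine ⟨?_, ?_, ?_⟩
        · rw [map_smul]; exact Submodule.smul_mem _ _ hf.1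
        · rw [map_smul, map_smul, hf.2.1, smul_zero]
        · rw [map_smul, hf.2.2]
    let L : VD D (Q \ s) →ₗ[ℝ] VD (D+1) Q :=
      ((mulBy (lin a)).domRestrict (VD D (Q \ s))).codRestrict _ (fun f => (key f f.2).1)
    let L2 : VD D (Q \ s) →ₗ[ℝ] LinearMap.ker R := L.codRestrict _ (fun f => (key f f.2).2.1)
    refine LinearMap.finrank_le_finrank_of_injective (f := L2) ?_
    refine (injective_iff_map_eq_zero L2).2 ?_
    intro f hf
    have hf2 : mulBy (lin a) (f : X5 → ℝ) = 0 := by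
      have := congrArg (fun z => (((z : LinearMap.ker R) : VD (D+1) Q) : X5 → ℝ)) hf
      exact this
    apply Subtype.ext
    ext x
    have h5 := congrFun hf2 x
    have h6 : lin a x * (f : X5 → ℝ) x = 0 := h5
    rcases mul_eq_zero.1 h6 with h7 | h7
    · rw [← (key f f.2).2.2]
      have : x ∉ Q \ s := fun h => h.2 h7
      simp [ind, this]
    · exact h7
  unfold H
  omega
end PST

namespace PST
open Module

theorem H_pos (D : ℕ) (Q : Set X5) (hQ : Q.Nonempty) (h4 : ∀ x ∈ Q, x 4 = 1) : 0 < H D Q := by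
  unfold H
  rw [Module.finrank_pos_iff_exists_ne_zero]
  obtain ⟨x, hx⟩ := hQ
  refine ⟨⟨ind Q (mon (sg 4 D)), Submodule.subset_span ⟨_, ?_, rfl⟩⟩, ?_⟩
  · rw [Finset.mem_coe, mem_mons]
    simp
  · intro h
    have h1 := congrFun (congrArg Subtype.val h) x
    have h2 : ind Q (mon (sg 4 D)) x = 1 := by
      simp [ind, hx, mon_single, h4 x hx]
    have h3 : ind Q (mon (sg 4 D)) x = 0 := h1
    rw [h2] at h3
    exact one_ne_zero h3

theorem good_subset (D : ℕ) (P : Finset X5) (hP : P.Nonempty) (h4 : ∀ x ∈ P, x 4 = 1) :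
    ∃ Q ⊆ P, Q.Nonempty ∧ ∃ l : ℝ, 0 < l ∧ l * Q.card = H D (Q : Set X5) ∧
      l * P.card ≤ H D (P : Set X5) ∧ ∀ Q' ⊆ Q, l * (Q'.card : ℝ) ≤ H D (Q' : Set X5) := by
  classical
  obtain ⟨Q, hQ, hmin⟩ := Finset.exists_min_image (P.powerset.filter (fun Q => Q.Nonempty))
    (fun Q => (H D (Q : Set X5) : ℝ) / Q.card) ⟨P, by simp [hP]⟩
  simp only [Finset.mem_filter, Finset.mem_powerset] at hQ hmin
  have hc : (0:ℝ) < Q.card := by exact_mod_cast hQ.2.card_pos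
  have key : ∀ Q' ⊆ P, (H D (Q : Set X5) : ℝ) / Q.card * (Q'.card : ℝ) ≤ H D (Q' : Set X5) := by
    intro Q' h
    rcases Q'.eq_empty_or_nonempty with rfl | hne
    · simp
    · have hc' : (0:ℝ) < Q'.card := by exact_mod_cast hne.card_pos
      exact (le_div_iff₀ hc').1 (hmin Q' ⟨h, hne⟩)
  refine ⟨Q, hQ.1, hQ.2, (H D (Q : Set X5) : ℝ) / Q.card, ?_, ?_, key P subset_rfl, fun Q' h => key Q' (h.trans hQ.1)⟩
  · have := H_pos D (Q : Set X5) hQ.2 (fun x hx => h4 x (hQ.1 hx))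
    positivity
  · field_simp

theorem VD_map (D : ℕ) (P Q : Set X5) (h : P ⊆ Q) : (VD D Q).map (ind P) = VD D P := by
  rw [VD, VD, Submodule.map_span, ← Set.image_comp]
  congr 1
  apply Set.image_congr
  intro e _
  simp only [Function.comp, ind_ind, Set.inter_eq_self_of_subset_left h]

theorem exists_rows (D : ℕ) (Q : Finset X5) :
    ∃ W : Q → Fin (H D (Q : Set X5)) → ℝ, ∀ Q' : Finset Q,
      finrank ℝ (Submodule.span ℝ (W '' (Q' : Set Q))) = H D (Subtype.val '' (Q' : Set Q)) := by
  let b : Basis (Fin (H D (Q : Set X5))) ℝ (VD D (Q : Set X5)) := finBasis ℝ (VD D (Q : Set X5))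
  refine ⟨fun p i => (b i : X5 → ℝ) p, fun Q' => ?_⟩
  let Mx : Matrix Q' (Fin (H D (Q : Set X5))) ℝ := Matrix.of fun p i => (b i : X5 → ℝ) p
  let v : Q' → X5 := fun p => ((p : Q) : X5)
  have hv : Function.Injective v := fun p q h => Subtype.ext (Subtype.ext h)
  let res : (X5 → ℝ) →ₗ[ℝ] (Q' → ℝ) := LinearMap.funLeft ℝ ℝ v
  let ext : (Q' → ℝ) →ₗ[ℝ] (X5 → ℝ) := Function.ExtendByZero.linearMap ℝ v
  have hext : Function.Injective ext := by
    intro f g h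
    funext p
    have := congrFun h (v p)
    simpa [ext, hv.extend_apply] using this
  have hcomp : ext ∘ₗ res = ind (Subtype.val '' (Q' : Set Q)) := by
    ext f x
    by_cases hx : ∃ p, v p = x
    · obtain ⟨p, rfl⟩ := hx
      have : v p ∈ (Subtype.val '' (Q' : Set Q)) := ⟨p, p.2, rfl⟩
      simp only [ind, LinearMap.coe_mk, AddHom.coe_mk, Set.indicator_of_mem this]
      simp [ext, hv.extend_apply, res, LinearMap.funLeft_apply]
    · have : x ∉ (Subtype.val '' (Q' : Set Q)) := by
        rintro ⟨p, hp, rfl⟩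
        exact hx ⟨⟨p, hp⟩, rfl⟩
      simp only [ind, LinearMap.coe_mk, AddHom.coe_mk, Set.indicator_of_notMem this]
      simp [ext, Function.extend_apply' _ _ _ hx]
  have h1 : (fun (p : Q) i => (b i : X5 → ℝ) p) '' (Q' : Set Q) = Set.range Mx.row := by
    ext f
    constructor
    · rintro ⟨p, hp, rfl⟩
      exact ⟨⟨p, hp⟩, rfl⟩
    · rintro ⟨p, rfl⟩
      exact ⟨p, p.2, rfl⟩
  rw [h1, ← Matrix.rank_eq_finrank_span_row, Matrix.rank_eq_finrank_span_cols]
  have h2 : Submodule.span ℝ (Set.range Mx.col) = (VD D (Q : Set X5)).map res := by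
    have h3 : (VD D (Q : Set X5)) = Submodule.span ℝ (Set.range fun i => (b i : X5 → ℝ)) := by
      have := congrArg (Submodule.map (VD D (Q : Set X5)).subtype) b.span_eq
      rw [Submodule.map_span, Submodule.map_subtype_top, ← Set.range_comp] at this
      exact this.symm
    rw [h3, Submodule.map_span, ← Set.range_comp]
    rfl
  rw [h2, (Submodule.equivMapOfInjective ext hext _).finrank_eq, ← Submodule.map_comp, hcomp, VD_map]
  · rfl
  · rintro _ ⟨p, _, rfl⟩
    exact p.2
end PST

namespace PST
open Module

open Classical in
theorem peel0 {σ : Type*} (D : ℕ) (P : Finset X5) (hP : P.Nonempty) (h4 : ∀ x ∈ P, x 4 = 1)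
    (hq : ∀ x ∈ P, x 0 ^ 2 = x 4 ^ 2 - x 1 ^ 2 - x 2 ^ 2)
    (T : Finset σ) (a : σ → Fin 5 → ℝ) (M : ℕ)
    (hM : ∀ p ∈ P, ∀ q ∈ P, ∀ r ∈ P, p ≠ q → q ≠ r → p ≠ r →
      (T.filter (fun s => lin (a s) p = 0 ∧ lin (a s) q = 0 ∧ lin (a s) r = 0)).card ≤ M) :
    ∃ Q ⊆ P, Q.Nonempty ∧ ∃ l : ℝ, 0 < l ∧ l * P.card ≤ 16 * ((D + 1 : ℕ) : ℝ)^3 ∧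
      ∃ h : σ → ℕ, (∀ s, l * ((Q.filter (fun x => lin (a s) x = 0)).card : ℝ) ≤ h s) ∧
        (∀ s, (h s : ℝ) ≤ l * ((Q.filter (fun x => lin (a s) x = 0)).card + 4 * Q.card / ((D+1 : ℕ):ℝ))) ∧
        ∀ T' ⊆ T, (∀ s ∈ T', 96 * h s ≤ (Q.filter (fun x => lin (a s) x = 0)).card) →
          ∑ s ∈ T', l^2 * ((Q.filter (fun x => lin (a s) x = 0)).card:ℝ)^3 / (h s:ℝ)^2 ≤ 128 * M * Q.card := by
  obtain ⟨Q, hQP, hQ, l, hl, hlQ, hlP, hl'⟩ := good_subset (D+1) P hP h4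
  obtain ⟨W, hW⟩ := exists_rows (D+1) Q
  have hset : ∀ s, ((Q.filter (fun x => lin (a s) x = 0) : Finset X5) : Set X5) = (Q : Set X5) ∩ {x | lin (a s) x = 0} := by
    intro s; ext x; simp
  have hlow : ∀ s, l * ((Q.filter (fun x => lin (a s) x = 0)).card : ℝ) ≤ H (D+1) ((Q : Set X5) ∩ {x | lin (a s) x = 0}) := by
    intro s
    rw [← hset s]
    exact hl' _ (Finset.filter_subset _ _)
  refine ⟨Q, hQP, hQ, l, hl, ?_, fun s => H (D+1) ((Q : Set X5) ∩ {x | lin (a s) x = 0}), hlow, ?_, ?_⟩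
  · refine hlP.trans ?_
    exact_mod_cast H_bound (D+1) (by omega) (P : Set X5) hq
  · intro s
    have h1 : (H (D+1) ((Q : Set X5) ∩ {x | lin (a s) x = 0}) : ℝ) + H D ((Q : Set X5) \ {x | lin (a s) x = 0}) ≤ H (D+1) (Q : Set X5) := by
      exact_mod_cast H_split D (Q : Set X5) (a s)
    have h2 : ((D:ℝ)+1) * H (D+1) ((Q : Set X5) \ {x | lin (a s) x = 0}) ≤ ((D:ℝ)+5) * H D ((Q : Set X5) \ {x | lin (a s) x = 0}) := by
      exact_mod_cast macaulay D ((Q : Set X5) \ {x | lin (a s) x = 0})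
    have h3 : l * ((Q.filter (fun x => ¬ lin (a s) x = 0)).card : ℝ) ≤ H (D+1) ((Q : Set X5) \ {x | lin (a s) x = 0}) := by
      have : ((Q.filter (fun x => ¬ lin (a s) x = 0) : Finset X5) : Set X5) = (Q : Set X5) \ {x | lin (a s) x = 0} := by
        ext x; simp
      rw [← this]
      exact hl' _ (Finset.filter_subset _ _)
    have h5 : ((Q.filter (fun x => lin (a s) x = 0)).card : ℝ) + ((Q.filter (fun x => ¬ lin (a s) x = 0)).card : ℝ) = Q.card := by
      exact_mod_cast Finset.card_filter_add_card_filter_not (s := Q) (fun x => lin (a s) x = 0)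
    rw [← hlQ] at h1
    generalize (H (D+1) ((Q : Set X5) ∩ {x | lin (a s) x = 0}) : ℝ) = u at *
    generalize (H D ((Q : Set X5) \ {x | lin (a s) x = 0}) : ℝ) = v at *
    generalize (H (D+1) ((Q : Set X5) \ {x | lin (a s) x = 0}) : ℝ) = w at *
    have hx : (0:ℝ) ≤ ((Q.filter (fun x => lin (a s) x = 0)).card : ℝ) := by positivity
    have hy : (0:ℝ) ≤ ((Q.filter (fun x => ¬ lin (a s) x = 0)).card : ℝ) := by positivity
    generalize ((Q.filter (fun x => lin (a s) x = 0)).card : ℝ) = x at *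
    generalize ((Q.filter (fun x => ¬ lin (a s) x = 0)).card : ℝ) = y at *
    generalize (Q.card : ℝ) = q at *
    push_cast
    have hD : (0:ℝ) ≤ D := by positivity
    have hD1 : (0:ℝ) < (D:ℝ)+1 := by positivity
    subst h5
    have h6 : ((D:ℝ)+1) * (l*y) ≤ ((D:ℝ)+5) * v := (mul_le_mul_of_nonneg_left h3 hD1.le).trans h2
    have h7 : l * y - 4 * (l*y)/((D:ℝ)+1) ≤ v := by
      have hly : 0 ≤ l*y := by positivity
      have : l * y - 4 * (l*y)/((D:ℝ)+1) ≤ ((D:ℝ)+1) * (l*y) / ((D:ℝ)+5) := by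
        rw [sub_le_iff_le_add, div_add_div _ _ (by positivity) (by positivity), le_div_iff₀ (by positivity)]
        nlinarith [mul_nonneg hly hD]
      refine this.trans ?_
      rw [div_le_iff₀ (by positivity)]
      linarith
    have h8 : 4 * (l*y)/((D:ℝ)+1) ≤ l * (4 * (x+y)/((D:ℝ)+1)) := by
      rw [mul_div_assoc', div_le_div_iff_of_pos_right hD1]
      nlinarith
    linarith
  · intro T' hT' h96
    have hk : l * Fintype.card Q = Fintype.card (Fin (H (D+1) (Q : Set X5))) := by simpa using hlQ
    have hr : ∀ Q' : Finset Q, l * Q'.card ≤ finrank ℝ (Submodule.span ℝ (W '' (Q' : Set Q))) := by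
      intro Q'
      rw [hW]
      have := hl' (Q'.map (Function.Embedding.subtype _)) (by
        intro x hx
        obtain ⟨p, _, rfl⟩ := Finset.mem_map.1 hx
        exact p.2)
      rw [Finset.card_map, Finset.coe_map] at this
      exact this
    obtain ⟨A, hA1, hA2, hA3, hA4⟩ := scaling W l hl hk hr
    have hcard : ∀ s, (Finset.univ.filter (fun p : Q => lin (a s) p = 0)).card = (Q.filter (fun x => lin (a s) x = 0)).card := by
      intro s
      rw [← Finset.card_map (Function.Embedding.subtype _)]
      congr 1
      ext x
      simp [and_comm]
    have := triple_sum A hA1 hA2 l hl hA3 T' (fun s => Finset.univ.filter (fun p : Q => lin (a s) p = 0))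
      (fun s => H (D+1) ((Q : Set X5) ∩ {x | lin (a s) x = 0})) ?_ ?_ M ?_
    · simp only [hcard] at this
      simpa using this
    · intro s _
      refine (hA4 _).trans (le_of_eq ?_)
      rw [hW]
      congr 1
      ext x
      simp [and_comm]
    · intro s hs
      rw [hcard]
      exact h96 s hs
    · intro p q r hpq hqr hpr
      refine le_trans (Finset.card_le_card ?_) (hM p (hQP p.2) q (hQP q.2) r (hQP r.2) (fun h => hpq (Subtype.ext h))
        (fun h => hqr (Subtype.ext h)) (fun h => hpr (Subtype.ext h)))
      intro s hs
      simp only [Finset.mem_filter, Finset.mem_univ, true_and] at hs ⊢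
      exact ⟨hT' hs.1, hs.2⟩
end PST

namespace PST
open Module

theorem peel_pt (x h l q D L : ℝ) (hx : 0 ≤ x) (hl : 0 < l) (hq : 0 < q) (hD : 0 < D) (hL : 0 < L)
    (h1 : l * x ≤ h) (h2 : h ≤ l * (x + 4 * q / D)) :
    (x ≥ q / D → x ≤ 25 * (l^2 * x^3 / h^2)) ∧
    (x < q / D → x ≤ L * q + 25 * (l^2 * x^3 / h^2) * (1/(D^2*L^2))) ∧
    (x ≥ q / D → h ≤ 5 * l * x) ∧ (x < q / D → h ≤ 5 * l * (q / D)) := by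
  have e : 4 * q / D = 4 * (q / D) := by ring
  rw [e] at h2
  have hqD : 0 < q / D := by positivity
  have h3 : x ≥ q / D → h ≤ 5 * l * x := fun hr => by nlinarith
  have h4 : x < q / D → h ≤ 5 * l * (q / D) := fun hr => by nlinarith
  refine ⟨?_, ?_, h3, h4⟩
  · intro hr
    have h5 := h3 hr
    have hx0 : 0 < x := lt_of_lt_of_le hqD hr
    have hh : 0 < h := lt_of_lt_of_le (by positivity) h1
    rw [mul_div_assoc', le_div_iff₀ (by positivity)]
    have : h^2 ≤ (5*l*x)^2 := by gcongr
    nlinarith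
  · intro hr
    have h5 := h4 hr
    rcases hx.eq_or_lt with rfl | hx0
    · positivity
    have hh : 0 < h := lt_of_lt_of_le (by positivity) h1
    have h6 : x^3 / (L*q)^2 ≤ 25 * (l^2 * x^3 / h^2) * (1/(D^2*L^2)) := by
      have e2 : 25 * (l^2 * x^3 / h^2) * (1/(D^2*L^2)) = 25 * (l^2 * x^3) / (h^2 * (D^2*L^2)) := by
        field_simp
      rw [e2, div_le_div_iff₀ (by positivity) (by positivity)]
      have : h^2 ≤ (5*l*(q/D))^2 := by gcongr
      have e3 : (5*l*(q/D))^2 * (D^2) = 25*l^2*q^2 := by field_simp; norm_num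
      have h7 : h^2 * D^2 ≤ 25*l^2*q^2 := by rw [← e3]; gcongr
      calc x^3 * (h^2*(D^2*L^2)) = (h^2*D^2) * (x^3*L^2) := by ring
        _ ≤ (25*l^2*q^2) * (x^3*L^2) := by gcongr
        _ = _ := by ring
    have h8 : x ≤ L*q + x^3/(L*q)^2 := by
      have hp : 0 < L*q := by positivity
      rcases le_total x (L*q) with hc | hc
      · have : 0 ≤ x^3/(L*q)^2 := by positivity
        linarith
      · have : x ≤ x^3/(L*q)^2 := by
          rw [le_div_iff₀ (by positivity)]
          have : (L*q)^2 ≤ x^2 := by gcongr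
          nlinarith
        linarith
    linarith

open Classical in
theorem peel {σ : Type*} (D : ℕ) (hD : 1 ≤ D) (P : Finset X5) (hP : P.Nonempty) (h4 : ∀ x ∈ P, x 4 = 1)
    (hq : ∀ x ∈ P, x 0 ^ 2 = x 4 ^ 2 - x 1 ^ 2 - x 2 ^ 2)
    (T : Finset σ) (a : σ → Fin 5 → ℝ) (M : ℕ)
    (hM : ∀ p ∈ P, ∀ q ∈ P, ∀ r ∈ P, p ≠ q → q ≠ r → p ≠ r →
      (T.filter (fun s => lin (a s) p = 0 ∧ lin (a s) q = 0 ∧ lin (a s) r = 0)).card ≤ M)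
    (hm : 7680 * D^3 ≤ P.card) :
    ∃ Q ⊆ P, Q.Nonempty ∧ ∀ L : ℝ, 0 < L →
      ∑ s ∈ T, ((Q.filter (fun x => lin (a s) x = 0)).card : ℝ) ≤
        Q.card * (3200 * M * (1 + 1/((D:ℝ)^2*L^2)) + T.card * (7680 * (D:ℝ)^2 / P.card + L)) := by
  obtain ⟨D, rfl⟩ : ∃ D', D = D' + 1 := ⟨D - 1, by omega⟩
  obtain ⟨Q, hQP, hQ, l, hl, hlP, h, h1, h2, h3⟩ := peel0 D P hP h4 hq T a M hM
  refine ⟨Q, hQP, hQ, fun L hL => ?_⟩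
  have hqc : (0:ℝ) < Q.card := by exact_mod_cast hQ.card_pos
  have hpc : (0:ℝ) < P.card := by exact_mod_cast hP.card_pos
  have hDp : (0:ℝ) < ((D+1 : ℕ) : ℝ) := by positivity
  have hm' : 7680 * ((D+1 : ℕ) : ℝ)^3 ≤ P.card := by exact_mod_cast hm
  set E : ℝ := ((D+1 : ℕ) : ℝ) with hE
  set q : ℝ := (Q.card : ℝ)
  set m : ℝ := (P.card : ℝ)
  have hl480 : 480 * l ≤ 1 := by
    by_contra hc
    push Not at hc
    nlinarith
  set x : σ → ℕ := fun s => (Q.filter (fun x => lin (a s) x = 0)).card with hx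
  set T' := T.filter (fun s => 96 * h s ≤ x s) with hT'
  have h5 := h3 T' (Finset.filter_subset _ _) (fun s hs => (Finset.mem_filter.1 hs).2)
  have key : ∀ s ∈ T, (x s : ℝ) ≤ (480 * l * (q/E) + L * q) +
      (if 96 * h s ≤ x s then 25 * (1 + 1/(E^2*L^2)) * (l^2 * (x s : ℝ)^3 / (h s : ℝ)^2) else 0) := by
    intro s _
    obtain ⟨p1, p2, p3, p4⟩ := peel_pt (x s) (h s) l q E L (by positivity) hl hqc hDp hL (h1 s) (h2 s)
    have n1 : 0 ≤ 480 * l * (q/E) := by positivity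
    have n2 : 0 ≤ L * q := by positivity
    have n3 : 0 ≤ l^2 * (x s : ℝ)^3 / (h s : ℝ)^2 := by positivity
    have n4 : 0 ≤ 1/(E^2*L^2) := by positivity
    have n5 := mul_nonneg n3 n4
    rcases lt_or_ge (x s : ℝ) (q/E) with hc | hc
    · split_ifs with h6
      · have := p2 hc
        nlinarith
      · push Not at h6
        have h7 : (x s : ℝ) < 96 * h s := by exact_mod_cast h6
        have := p4 hc
        nlinarith
    · have h6 : 96 * h s ≤ x s := by
        have := p3 hc
        have : (96 * h s : ℝ) ≤ x s := by
          have : (0:ℝ) ≤ x s := by positivity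
          nlinarith
        exact_mod_cast this
      rw [if_pos h6]
      have := p1 hc
      nlinarith
  have h6 := Finset.sum_le_sum key
  rw [Finset.sum_add_distrib, Finset.sum_const, nsmul_eq_mul, ← Finset.sum_filter, ← Finset.mul_sum] at h6
  have h7 : 25 * (1 + 1/(E^2*L^2)) * ∑ s ∈ T', (l^2 * (x s : ℝ)^3 / (h s : ℝ)^2) ≤ 25 * (1 + 1/(E^2*L^2)) * (128 * M * q) := by
    gcongr
  have h8 : 480 * l * (q/E) ≤ q * (7680 * E^2 / m) := by
    rw [mul_div_assoc', mul_div_assoc', div_le_div_iff₀ hDp hpc]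
    have := mul_le_mul_of_nonneg_left hlP (by positivity : 0 ≤ 480 * q)
    nlinarith
  have h9 : (T.card : ℝ) * (480 * l * (q/E) + L*q) ≤ T.card * (q * (7680 * E^2 / m) + L*q) := by gcongr
  calc _ ≤ _ := h6
    _ ≤ T.card * (q * (7680 * E^2 / m) + L*q) + 25 * (1 + 1/(E^2*L^2)) * (128 * M * q) := add_le_add h9 h7
    _ = _ := by ring
end PST

namespace PST
open Module

theorem rate (m n D : ℕ) (X Y M : ℝ) (hX : 0 < X) (hY : 0 < Y) (hM : 0 ≤ M) (hXm : X^4 = m) (hYn : Y^4 = n)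
    (hD : 1 ≤ D) (h1 : D^8 * n ≤ m^3) (h3 : m^3 < (D+1)^8 * n ∨ m < 7680 * (D+1)^3) :
    ∃ L : ℝ, 0 < L ∧ 3200 * M * (1 + 1/((D:ℝ)^2*L^2)) + n * (7680 * (D:ℝ)^2 / m + L) ≤
      10^33 * (M+1) * (1 + Y^3/X) := by
  have hd : (1:ℝ) ≤ D := by exact_mod_cast hD
  have h1' : (D:ℝ)^8 * Y^4 ≤ (X^4)^3 := by rw [hXm, hYn]; exact_mod_cast h1
  have h3' : (X^4)^3 < (2*(D:ℝ))^8 * Y^4 ∨ X^4 < 7680 * (2*(D:ℝ))^3 := by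
    have h2 : ((D:ℝ)+1) ≤ 2 * D := by linarith
    rcases h3 with h | h
    · left
      rw [hXm, hYn]
      have h' : (m:ℝ)^3 < ((D:ℝ)+1)^8 * n := by exact_mod_cast h
      exact h'.trans_le (by gcongr)
    · right
      rw [hXm]
      have h' : (m:ℝ) < 7680 * ((D:ℝ)+1)^3 := by exact_mod_cast h
      exact h'.trans_le (by gcongr)
  rw [← hXm, ← hYn]
  clear h3 h1
  generalize (D:ℝ) = d at *
  have hd0 : 0 < d := by linarith
  have hA : d^2 * Y ≤ X^3 := by
    refine le_of_pow_le_pow_left₀ (n := 4) (by norm_num) (by positivity) ?_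
    nlinarith
  have hB : Y^4 * (7680 * d^2 / X^4) ≤ 7680 * (Y^3/X) := by
    rw [mul_div_assoc', mul_div_assoc', div_le_div_iff₀ (by positivity) (by positivity)]
    have := mul_le_mul_of_nonneg_left hA (by positivity : 0 ≤ 7680 * Y^3 * X)
    nlinarith
  have hZ : 0 < Y^3/X := by positivity
  rcases h3' with h | h
  · refine ⟨1/(X*Y), by positivity, ?_⟩
    have hC : X^3 < 4 * d^2 * Y := by
      refine lt_of_pow_lt_pow_left₀ 4 (by positivity) ?_
      nlinarith
    have hD : 1/(d^2*(1/(X*Y))^2) ≤ 4 * (Y^3/X) := by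
      have : 1/(d^2*(1/(X*Y))^2) = X^2*Y^2/d^2 := by field_simp
      rw [this, mul_div_assoc', div_le_div_iff₀ (by positivity) (by positivity)]
      have := mul_le_mul_of_nonneg_left hC.le (by positivity : 0 ≤ Y^2)
      nlinarith
    have hE : Y^4 * (1/(X*Y)) = Y^3/X := by field_simp
    rw [mul_add (Y^4), hE]
    generalize Y^3/X = Z at *
    have := mul_le_mul_of_nonneg_left hD hM
    nlinarith [mul_nonneg hM hZ.le]
  · refine ⟨1/Y^4, by positivity, ?_⟩
    have hc : X^4 < 61440 * d^3 := by nlinarith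
    have e1 : X^8 ≤ 61440^2 * d^6 := by
      have := pow_le_pow_left₀ (by positivity) hc.le 2
      nlinarith
    have e2 : Y^3 ≤ 61440^2 * X := by
      have h5 : (d^2*Y)^3 ≤ (X^3)^3 := by gcongr
      have h6 : X^8 * Y^3 ≤ X^8 * (61440^2 * X) := by
        calc X^8 * Y^3 ≤ (61440^2 * d^6) * Y^3 := by gcongr
          _ = 61440^2 * (d^2*Y)^3 := by ring
          _ ≤ 61440^2 * (X^3)^3 := by gcongr
          _ = _ := by ring
      exact le_of_mul_le_mul_left h6 (by positivity)
    have e3 : Y^8 ≤ 61440^6 * d^2 := by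
      refine le_of_pow_le_pow_left₀ (n := 3) (by norm_num) (by positivity) ?_
      calc (Y^8)^3 = (Y^3)^8 := by ring
        _ ≤ (61440^2*X)^8 := by gcongr
        _ = 61440^16 * X^8 := by ring
        _ ≤ 61440^16 * (61440^2 * d^6) := by gcongr
        _ = _ := by ring
    have hD : 1/(d^2*(1/Y^4)^2) ≤ 61440^6 := by
      have : 1/(d^2*(1/Y^4)^2) = Y^8/d^2 := by field_simp
      rw [this, div_le_iff₀ (by positivity)]
      exact e3
    have hE : Y^4 * (1/Y^4) = 1 := by field_simp
    rw [mul_add (Y^4), hE]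
    generalize Y^3/X = Z at *
    have := mul_le_mul_of_nonneg_left hD hM
    nlinarith [mul_nonneg hM hZ.le]

theorem le_choose3 (x : ℕ) : x ≤ 2 + x.choose 3 := by
  induction x with
  | zero => omega
  | succ x ih =>
    rcases lt_or_ge x 2 with h | h
    · omega
    · have : 0 < x.choose 2 := Nat.choose_pos h
      have h2 : (x+1).choose 3 = x.choose 2 + x.choose 3 := Nat.choose_succ_succ' x 2
      omega

open Classical in
theorem kst {σ : Type*} (P : Finset X5)
    (T : Finset σ) (a : σ → Fin 5 → ℝ) (M : ℕ)
    (hM : ∀ p ∈ P, ∀ q ∈ P, ∀ r ∈ P, p ≠ q → q ≠ r → p ≠ r →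
      (T.filter (fun s => lin (a s) p = 0 ∧ lin (a s) q = 0 ∧ lin (a s) r = 0)).card ≤ M) :
    ∑ s ∈ T, (P.filter (fun x => lin (a s) x = 0)).card ≤ 2 * T.card + M * P.card^3 := by
  calc ∑ s ∈ T, (P.filter (fun x => lin (a s) x = 0)).card
      ≤ ∑ s ∈ T, (2 + ((P.filter (fun x => lin (a s) x = 0)).card).choose 3) := Finset.sum_le_sum fun s _ => le_choose3 _
    _ = 2 * T.card + ∑ s ∈ T, ((P.powersetCard 3).filter (fun t => ∀ x ∈ t, lin (a s) x = 0)).card := by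
        rw [Finset.sum_add_distrib, Finset.sum_const, smul_eq_mul, mul_comm]
        congr 1
        refine Finset.sum_congr rfl fun s _ => ?_
        rw [← Finset.card_powersetCard]
        congr 1
        ext t
        simp only [Finset.mem_powersetCard, Finset.mem_filter, Finset.subset_iff]
        constructor
        · rintro ⟨h1, h2⟩
          exact ⟨⟨fun x hx => (h1 hx).1, h2⟩, fun x hx => (h1 hx).2⟩
        · rintro ⟨⟨h1, h2⟩, h3⟩
          exact ⟨fun x hx => ⟨h1 hx, h3 x hx⟩, h2⟩
    _ = 2 * T.card + ∑ t ∈ P.powersetCard 3, (T.filter (fun s => ∀ x ∈ t, lin (a s) x = 0)).card := by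
        congr 1
        simp only [Finset.card_filter]
        rw [Finset.sum_comm]
    _ ≤ 2 * T.card + ∑ t ∈ P.powersetCard 3, M := by
        gcongr with t ht
        rw [Finset.mem_powersetCard] at ht
        obtain ⟨p, q, r, hpq, hpr, hqr, rfl⟩ := Finset.card_eq_three.1 ht.2
        have := hM p (ht.1 (by simp)) q (ht.1 (by simp)) r (ht.1 (by simp)) hpq hqr hpr
        simpa using this
    _ ≤ 2 * T.card + M * P.card^3 := by
        rw [Finset.sum_const, smul_eq_mul, mul_comm _ M, Finset.card_powersetCard]
        gcongr
        exact Nat.choose_le_pow _ _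

open Classical in
theorem incidence {σ : Type*} 
    (T : Finset σ) (a : σ → Fin 5 → ℝ) (M : ℕ) (Y : ℝ) (hY : 0 ≤ Y) (hYn : Y^4 = T.card) (m : ℕ) :
    ∀ (P : Finset X5) (h4 : ∀ x ∈ P, x 4 = 1)
    (hq : ∀ x ∈ P, x 0 ^ 2 = x 4 ^ 2 - x 1 ^ 2 - x 2 ^ 2)
    (hM : ∀ p ∈ P, ∀ q ∈ P, ∀ r ∈ P, p ≠ q → q ≠ r → p ≠ r →
      (T.filter (fun s => lin (a s) p = 0 ∧ lin (a s) q = 0 ∧ lin (a s) r = 0)).card ≤ M)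
    (X : ℝ) (hX : 0 ≤ X) (hXm : X^4 = P.card), P.card = m →
    ∑ s ∈ T, ((P.filter (fun x => lin (a s) x = 0)).card : ℝ) ≤ 2 * 10^33 * (M+1) * (X^3*Y^3 + X^4 + Y^4) := by
  induction m using Nat.strong_induction_on with
  | _ m ih =>
  intro P h4 hq hM X hX hXm hPm
  have hM0 : (0:ℝ) ≤ M := by positivity
  have hXY : 0 ≤ X^3*Y^3 := by positivity
  have hY4 : 0 ≤ Y^4 := by positivity
  have hX4 : 0 ≤ X^4 := by positivity
  have n1 := mul_nonneg hM0 hXY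
  have n2 := mul_nonneg hM0 hX4
  have n3 := mul_nonneg hM0 hY4
  by_cases hn : T.card = 0
  · rw [Finset.card_eq_zero.1 hn]; simp; positivity
  have hnpos : 0 < T.card := by omega
  have hYpos : 0 < Y := by
    rcases hY.eq_or_lt with h | h
    · have : (0:ℝ) < T.card := by exact_mod_cast hnpos
      rw [← hYn, ← h] at this; norm_num at this
    · exact h
  by_cases hsm : P.card < 7680
  · have : ∑ s ∈ T, ((P.filter (fun x => lin (a s) x = 0)).card : ℝ) ≤ ∑ s ∈ T, (7680:ℝ) := by
      refine Finset.sum_le_sum fun s _ => ?_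
      have : (P.filter (fun x => lin (a s) x = 0)).card ≤ 7680 := (Finset.card_le_card (Finset.filter_subset _ _)).trans hsm.le
      exact_mod_cast this
    rw [Finset.sum_const, nsmul_eq_mul, ← hYn] at this
    nlinarith
  by_cases hsm2 : P.card^3 < T.card
  · have h1 := kst P T a M hM
    have h2 : ∑ s ∈ T, (P.filter (fun x => lin (a s) x = 0)).card ≤ 2 * T.card + M * T.card :=
      h1.trans (by gcongr)
    have h3 : ∑ s ∈ T, ((P.filter (fun x => lin (a s) x = 0)).card : ℝ) ≤ 2 * Y^4 + M * Y^4 := by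
      rw [hYn]; exact_mod_cast h2
    nlinarith
  push Not at hsm hsm2
  obtain ⟨D, hD1, hD2, hD3, hD4⟩ : ∃ D : ℕ, 1 ≤ D ∧ D^8 * T.card ≤ P.card^3 ∧ 7680 * D^3 ≤ P.card ∧
      (P.card^3 < (D+1)^8 * T.card ∨ P.card < 7680 * (D+1)^3) := by
    let p : ℕ → Prop := fun D => D^8 * T.card ≤ P.card^3 ∧ 7680 * D^3 ≤ P.card
    have hp1 : p 1 := by constructor <;> simpa
    have hpos : 1 ≤ P.card := by omega
    refine ⟨Nat.findGreatest p P.card, Nat.le_findGreatest hpos hp1, (Nat.findGreatest_spec hpos hp1).1,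
      (Nat.findGreatest_spec hpos hp1).2, ?_⟩
    by_contra hc
    push Not at hc
    have hp2 : p (Nat.findGreatest p P.card + 1) := hc
    have : Nat.findGreatest p P.card + 1 ≤ P.card := by
      have := hc.2
      have h5 : Nat.findGreatest p P.card + 1 ≤ (Nat.findGreatest p P.card + 1)^3 := Nat.le_self_pow (by norm_num) _
      omega
    have := Nat.le_findGreatest this hp2
    omega
  have hP : P.Nonempty := Finset.card_pos.1 (by omega)
  have hXpos : 0 < X := by
    rcases hX.eq_or_lt with h | h
    · have : (0:ℝ) < P.card := by exact_mod_cast hP.card_pos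
      rw [← hXm, ← h] at this; norm_num at this
    · exact h
  obtain ⟨Q, hQP, hQ, hQL⟩ := peel D hD1 P hP h4 hq T a M hM hD3
  obtain ⟨L, hL, hrate⟩ := rate P.card T.card D X Y M hXpos hYpos hM0 hXm hYn hD1 hD2 hD4
  have hI := hQL L hL
  have hqc := hQ.card_pos
  have hI2 := hI.trans (mul_le_mul_of_nonneg_left hrate (by positivity))
  have hcard : (P \ Q).card + Q.card = P.card := Finset.card_sdiff_add_card_eq_card hQP
  obtain ⟨Z, hZ, hZm⟩ : ∃ Z : ℝ, 0 ≤ Z ∧ Z^4 = (P \ Q).card := by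
    refine ⟨√√((P \ Q).card : ℝ), by positivity, ?_⟩
    rw [show (4:ℕ) = 2*2 by rfl, pow_mul, Real.sq_sqrt (by positivity), Real.sq_sqrt (by positivity)]
  have hJ := ih (P \ Q).card (by omega) (P \ Q) (fun x hx => h4 x (Finset.mem_sdiff.1 hx).1)
    (fun x hx => hq x (Finset.mem_sdiff.1 hx).1)
    (fun p hp q hq' r hr => hM p (Finset.mem_sdiff.1 hp).1 q (Finset.mem_sdiff.1 hq').1 r (Finset.mem_sdiff.1 hr).1)
    Z hZ hZm rfl
  have hsum : ∑ s ∈ T, ((P.filter (fun x => lin (a s) x = 0)).card : ℝ) =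
      ∑ s ∈ T, ((Q.filter (fun x => lin (a s) x = 0)).card : ℝ) +
      ∑ s ∈ T, (((P \ Q).filter (fun x => lin (a s) x = 0)).card : ℝ) := by
    rw [← Finset.sum_add_distrib]
    refine Finset.sum_congr rfl fun s _ => ?_
    norm_cast
    rw [← Finset.card_union_of_disjoint, ← Finset.filter_union, Finset.union_sdiff_of_subset hQP]
    exact Finset.disjoint_filter_filter Finset.disjoint_sdiff
  rw [hsum]
  have hqe : (Q.card : ℝ) = X^4 - Z^4 := by
    rw [hXm, hZm]
    have : ((P \ Q).card : ℝ) + Q.card = P.card := by exact_mod_cast hcard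
    linarith
  have hqpos : (0:ℝ) < Q.card := by exact_mod_cast hqc
  have hZX : Z ≤ X := by
    refine le_of_pow_le_pow_left₀ (n := 4) (by norm_num) hX ?_
    linarith
  rw [hqe] at hI2
  have hdiff : (X^4 - Z^4) * (Y^3/X) ≤ 2 * (X^3 - Z^3) * Y^3 := by
    rw [mul_div_assoc', div_le_iff₀ hXpos]
    have h9 : X^4 - Z^4 ≤ 2 * (X^3-Z^3) * X := by
      have h10 : 0 ≤ X - Z := by linarith
      have h11 : 0 ≤ X^3 + X^2*Z + X*Z^2 - Z^3 := by
        have : Z^3 ≤ X^3 := by gcongr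
        have : 0 ≤ X^2*Z + X*Z^2 := by positivity
        linarith
      nlinarith [mul_nonneg h10 h11]
    have := mul_le_mul_of_nonneg_right h9 (by positivity : 0 ≤ Y^3)
    nlinarith
  have hq4 : 0 ≤ X^4 - Z^4 := by rw [← hqe]; exact hqpos.le
  have hM1 : (0:ℝ) ≤ 10^33 * (M+1) := by positivity
  have f1 := mul_le_mul_of_nonneg_left hdiff hM1
  have f2 := mul_nonneg hM1 hq4
  have e1 : (2 * 10^33 * ((M:ℝ)+1)) = 2 * (10^33 * ((M:ℝ)+1)) := by ring
  rw [e1] at hJ ⊢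
  generalize (10^33 * ((M:ℝ)+1)) = K at *
  generalize Y^3/X = w at *
  linarith
end PST

namespace PST

theorem plane_unit (q : Set Pt3) (h : IsPlane3 q) :
    ∃ u : Pt3, ∃ d : ℝ, ‖u‖ = 1 ∧ q = {x : Pt3 | ⟪u, x⟫ = d} := by
  obtain ⟨u, d, hu, rfl⟩ := h
  have hn : ‖u‖ ≠ 0 := norm_ne_zero_iff.2 hu
  refine ⟨‖u‖⁻¹ • u, ‖u‖⁻¹ * d, ?_, ?_⟩
  · rw [norm_smul, norm_inv, norm_norm, inv_mul_cancel₀ hn]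
  · ext x
    simp only [Set.mem_ofPred_eq, real_inner_smul_left]
    constructor
    · intro h; rw [h]
    · intro h; exact mul_left_cancel₀ (inv_ne_zero hn) h

theorem tangent_iff (u c : Pt3) (d r : ℝ) (hu : ‖u‖ = 1) (hr : 0 < r) :
    Tangent3 {x : Pt3 | ⟪u, x⟫ = d} (Metric.sphere c r) ↔ (⟪u, c⟫ - d)^2 = r^2 := by
  have huu : ⟪u, u⟫ = 1 := by rw [real_inner_self_eq_norm_sq, hu]; norm_num
  obtain ⟨t, ht⟩ : ∃ t, t = ⟪u, c⟫ - d := ⟨_, rfl⟩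
  rw [← ht]
  have hmem : ∀ x : Pt3, x ∈ Metric.sphere c r ↔ ⟪x - c, x - c⟫ = r^2 := by
    intro x
    rw [mem_sphere_iff_norm, real_inner_self_eq_norm_sq]
    constructor
    · intro h; rw [h]
    · intro h; exact (pow_left_inj₀ (norm_nonneg _) hr.le (by norm_num)).1 h
  constructor
  · rintro ⟨p, hp⟩
    have h1 : p ∈ {x : Pt3 | ⟪u, x⟫ = d} ∩ Metric.sphere c r := by rw [hp]; rfl
    have hp1 : ⟪u, p⟫ = d := h1.1
    have hp2 := (hmem p).1 h1.2
    have h2 : (2:ℝ) • (c - t • u) - p ∈ {x : Pt3 | ⟪u, x⟫ = d} ∩ Metric.sphere c r := by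
      refine ⟨?_, ?_⟩
      · simp only [Set.mem_ofPred_eq, inner_sub_right, real_inner_smul_right, huu, hp1]
        linarith
      · rw [hmem]
        have e : (2:ℝ) • (c - t • u) - p - c = -(p - c) - (2 * t) • u := by
          rw [smul_sub, two_smul, smul_smul]; abel
        rw [e]
        simp only [inner_sub_left, inner_sub_right, inner_neg_left, inner_neg_right, real_inner_smul_left,
          real_inner_smul_right, huu, hp1, real_inner_comm] at hp2 ⊢
        have huc : ⟪u, c⟫ = t + d := by linarith
        rw [huc]
        linarith
    rw [hp] at h2
    have h3 : (2:ℝ) • (c - t • u) - p = p := h2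
    have h4 : p - c = -(t • u) := by
      have : (2:ℝ) • (c - t • u) = (2:ℝ) • p := by
        rw [two_smul ℝ p]; exact sub_eq_iff_eq_add.1 h3
      have h5 := smul_right_injective Pt3 (two_ne_zero (α := ℝ)) this
      rw [← h5]; abel
    rw [h4] at hp2
    simp only [inner_neg_left, inner_neg_right, real_inner_smul_left, real_inner_smul_right, huu] at hp2
    linarith
  · intro htr
    refine ⟨c - t • u, ?_⟩
    ext x
    rw [Set.mem_inter_iff, hmem, Set.mem_ofPred_eq, Set.mem_singleton_iff]
    constructor
    · rintro ⟨h1, h2⟩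
      rw [← sub_eq_zero, ← inner_self_eq_zero (𝕜 := ℝ)]
      have e : x - (c - t • u) = (x - c) + t • u := by abel
      have h3 : ⟪u, x - c⟫ = -t := by rw [inner_sub_right, h1]; linarith
      rw [e]
      simp only [inner_add_left, inner_add_right, real_inner_smul_left, real_inner_smul_right, huu, h2, h3,
        real_inner_comm u (x - c)]
      linarith
    · rintro rfl
      constructor
      · rw [inner_sub_right, real_inner_smul_right, huu]; linarith
      · have e : c - t • u - c = -(t • u) := by abel
        rw [e]
        simp only [inner_neg_left, inner_neg_right, real_inner_smul_left, real_inner_smul_right, huu]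
        linarith

def pt (u : Pt3) (d : ℝ) : X5 := ![u 0, u 1, u 2, d, 1]
def form (c : Pt3) (r : ℝ) (b : Bool) : X5 := ![c 0, c 1, c 2, -1, if b then r else -r]

theorem lin_form (u c : Pt3) (d r : ℝ) (b : Bool) :
    lin (form c r b) (pt u d) = ⟪u, c⟫ - d + if b then r else -r := by
  simp [lin, form, pt, Fin.sum_univ_five, PiLp.inner_apply, Fin.sum_univ_three]
  ring

theorem pt_inj (u u' : Pt3) (d d' : ℝ) (h : pt u d = pt u' d') : u = u' ∧ d = d' := by
  refine ⟨?_, congrFun h 3⟩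
  ext i
  fin_cases i
  · exact congrFun h 0
  · exact congrFun h 1
  · exact congrFun h 2

theorem pt_quad (u : Pt3) (d : ℝ) (hu : ‖u‖ = 1) : (pt u d) 0 ^ 2 = (pt u d) 4 ^ 2 - (pt u d) 1 ^ 2 - (pt u d) 2 ^ 2 := by
  have := EuclideanSpace.real_norm_sq_eq u
  rw [hu, Fin.sum_univ_three] at this
  simp [pt]
  linarith

open Classical in
theorem final (M n k : ℕ) (Pl S : Finset (Set Pt3)) (hn : Pl.card = n) (hk : S.card = k)
    (hPl : ∀ q ∈ Pl, IsPlane3 q) (hS : ∀ s ∈ S, IsSphere3 s)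
    (hK : ¬ ∃ F : Finset (Set Pt3), F ⊆ Pl ∧ ∃ G : Finset (Set Pt3), G ⊆ S ∧
          F.card = 3 ∧ G.card = M ∧ ∀ q ∈ F, ∀ s ∈ G, Tangent3 q s) :
    (({q : Set Pt3 × Set Pt3 | q.1 ∈ Pl ∧ q.2 ∈ S ∧ Tangent3 q.1 q.2}).ncard : ℝ) ≤
      (8 * (2 * 10^33 * ((M:ℝ)+1))) * ((n : ℝ) ^ ((3 : ℝ) / 4) * (k : ℝ) ^ ((3 : ℝ) / 4) + (n : ℝ) + (k : ℝ)) := by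
  choose! u d hu hq using fun q (h : q ∈ Pl) => plane_unit q (hPl q h)
  choose! c r hr hs using hS
  let f : Set Pt3 → X5 := fun q => pt (u q) (d q)
  let a : Set Pt3 × Bool → X5 := fun s => form (c s.1) (r s.1) s.2
  have hf : Set.InjOn f Pl := by
    intro q hq1 q' hq1' h
    obtain ⟨h1, h2⟩ := pt_inj _ _ _ _ h
    rw [hq q hq1, hq q' hq1', h1, h2]
  have htan : ∀ q ∈ Pl, ∀ s ∈ S, (Tangent3 q s ↔ ∃ b, lin (a (s, b)) (f q) = 0) := by
    intro q h1 s h2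
    have : Tangent3 q s ↔ (⟪u q, c s⟫ - d q)^2 = (r s)^2 := by
      rw [← tangent_iff (u q) (c s) (d q) (r s) (hu q h1) (hr s h2), ← hq q h1, ← hs s h2]
    rw [this, sq_eq_sq_iff_eq_or_eq_neg]
    simp only [Bool.exists_bool, a, f, lin_form]
    simp only [Bool.false_eq_true, if_false, if_true]
    constructor
    · rintro (h | h)
      · left; linarith
      · right; linarith
    · rintro (h | h)
      · left; linarith
      · right; linarith
  have huniq : ∀ q ∈ Pl, ∀ s ∈ S, ∀ b b', lin (a (s, b)) (f q) = 0 → lin (a (s, b')) (f q) = 0 → b = b' := by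
    intro q h1 s h2 b b' e1 e2
    simp only [a, f, lin_form] at e1 e2
    have := hr s h2
    cases b <;> cases b' <;> simp at e1 e2 ⊢ <;> linarith
  let P := Pl.image f
  let T : Finset (Set Pt3 × Bool) := S ×ˢ Finset.univ
  have hPc : P.card = n := by rw [Finset.card_image_of_injOn hf, hn]
  have hTc : (T.card : ℝ) = 2 * k := by simp [T, hk]; ring
  have hM : ∀ p ∈ P, ∀ q ∈ P, ∀ r ∈ P, p ≠ q → q ≠ r → p ≠ r →
      (T.filter (fun s => lin (a s) p = 0 ∧ lin (a s) q = 0 ∧ lin (a s) r = 0)).card ≤ M := by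
    intro p hp q hq' r hr' hpq hqr hpr
    obtain ⟨q1, h1, rfl⟩ := Finset.mem_image.1 hp
    obtain ⟨q2, h2, rfl⟩ := Finset.mem_image.1 hq'
    obtain ⟨q3, h3, rfl⟩ := Finset.mem_image.1 hr'
    have hG : (S.filter (fun s => Tangent3 q1 s ∧ Tangent3 q2 s ∧ Tangent3 q3 s)).card ≤ M := by
      by_contra hc
      push Not at hc
      obtain ⟨G, hG1, hG2⟩ := Finset.exists_subset_card_eq hc.le
      refine hK ⟨{q1, q2, q3}, ?_, G, hG1.trans (Finset.filter_subset _ _), ?_, hG2, ?_⟩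
      · intro x hx
        simp only [Finset.mem_insert, Finset.mem_singleton] at hx
        rcases hx with rfl | rfl | rfl <;> assumption
      · exact Finset.card_eq_three.2 ⟨q1, q2, q3, fun h => hpq (by rw [h]), fun h => hpr (by rw [h]), fun h => hqr (by rw [h]), rfl⟩
      · intro x hx s hsG
        have := (Finset.mem_filter.1 (hG1 hsG)).2
        simp only [Finset.mem_insert, Finset.mem_singleton] at hx
        rcases hx with rfl | rfl | rfl
        · exact this.1
        · exact this.2.1
        · exact this.2.2
    refine le_trans (Finset.card_le_card_of_injOn Prod.fst ?_ ?_) hG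
    · rintro ⟨s, b⟩ hsb
      simp only [Finset.coe_filter, Set.mem_ofPred_eq, T, Finset.mem_product, Finset.mem_univ, and_true] at hsb ⊢
      obtain ⟨g0, g1, g2, g3⟩ := hsb
      exact ⟨g0, (htan _ h1 _ g0).2 ⟨b, g1⟩, (htan _ h2 _ g0).2 ⟨b, g2⟩, (htan _ h3 _ g0).2 ⟨b, g3⟩⟩
    · rintro ⟨s, b⟩ hsb ⟨s', b'⟩ hsb' h
      simp only [Finset.coe_filter, Set.mem_ofPred_eq, T, Finset.mem_product, Finset.mem_univ, and_true] at hsb hsb' h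
      subst h
      rw [huniq q1 h1 s hsb.1 b b' hsb.2.1 hsb'.2.1]
  have hcount : (({q : Set Pt3 × Set Pt3 | q.1 ∈ Pl ∧ q.2 ∈ S ∧ Tangent3 q.1 q.2}).ncard : ℝ) ≤
      ∑ s ∈ T, ((P.filter (fun x => lin (a s) x = 0)).card : ℝ) := by
    have e1 : {q : Set Pt3 × Set Pt3 | q.1 ∈ Pl ∧ q.2 ∈ S ∧ Tangent3 q.1 q.2} =
        ((Pl ×ˢ S).filter (fun q => Tangent3 q.1 q.2) : Finset (Set Pt3 × Set Pt3)) := by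
      ext q; simp [and_assoc]
    rw [e1, Set.ncard_coe_finset]
    have e2 : ((Pl ×ˢ S).filter (fun q => Tangent3 q.1 q.2)).card = ∑ s ∈ S, (Pl.filter (fun q => Tangent3 q s)).card := by
      simp only [Finset.card_filter]
      rw [Finset.sum_product_right]
    rw [e2, Finset.sum_product]
    push_cast
    refine Finset.sum_le_sum fun s hsS => ?_
    rw [Fintype.sum_bool]
    norm_cast
    refine le_trans ?_ (Finset.card_union_le _ _)
    refine Finset.card_le_card_of_injOn f ?_ (hf.mono (by intro q h; exact (Finset.mem_filter.1 h).1))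
    intro q h
    obtain ⟨h1, h2⟩ := Finset.mem_filter.1 h
    obtain ⟨b, hb⟩ := (htan q h1 s hsS).1 h2
    have hfP : f q ∈ P := Finset.mem_image_of_mem f h1
    simp only [Finset.coe_union, Set.mem_union, Finset.mem_coe, Finset.mem_filter, hfP, true_and]
    cases b
    · right; exact hb
    · left; exact hb
  have hrt : ∀ z : ℝ, 0 ≤ z → (z^((1:ℝ)/4))^4 = z ∧ (z^((1:ℝ)/4))^3 = z^((3:ℝ)/4) := by
    intro z hz
    rw [← Real.rpow_natCast, ← Real.rpow_mul hz, ← Real.rpow_natCast, ← Real.rpow_mul hz]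
    norm_num
  obtain ⟨x4, x3⟩ := hrt n (by positivity)
  obtain ⟨y4, y3⟩ := hrt k (by positivity)
  obtain ⟨w4, -⟩ := hrt (2 * k) (by positivity)
  have hX : 0 ≤ (n:ℝ)^((1:ℝ)/4) := by positivity
  have hY : 0 ≤ (k:ℝ)^((1:ℝ)/4) := by positivity
  have hW : 0 ≤ (2*k:ℝ)^((1:ℝ)/4) := by positivity
  rw [← x3, ← y3]
  have hI := incidence T a M ((2*k:ℝ)^((1:ℝ)/4)) hW (by rw [w4, hTc]) n P
    (by
      intro x hx
      obtain ⟨q, _, rfl⟩ := Finset.mem_image.1 hx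
      rfl)
    (by
      intro x hx
      obtain ⟨q, h, rfl⟩ := Finset.mem_image.1 hx
      exact pt_quad _ _ (hu q h)) hM ((n:ℝ)^((1:ℝ)/4)) hX (by rw [x4, hPc]) hPc
  refine hcount.trans (hI.trans ?_)
  rw [x4, w4]
  generalize (n:ℝ)^((1:ℝ)/4) = X at *
  generalize (k:ℝ)^((1:ℝ)/4) = Y at *
  generalize (2*k:ℝ)^((1:ℝ)/4) = W at *
  have hWY : W ≤ 2 * Y := by
    refine le_of_pow_le_pow_left₀ (n := 4) (by norm_num) (by positivity) ?_
    have : 0 ≤ Y^4 := by positivity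
    rw [w4, ← y4]
    nlinarith
  have hW3 : W^3 ≤ 8 * Y^3 := by
    calc W^3 ≤ (2*Y)^3 := by gcongr
      _ = _ := by ring
  have hXW : X^3 * W^3 ≤ 8 * (X^3*Y^3) := by
    calc X^3*W^3 ≤ X^3 * (8*Y^3) := by gcongr
      _ = _ := by ring
  have hn0 : (0:ℝ) ≤ n := by positivity
  have hk0 : (0:ℝ) ≤ k := by positivity
  have : X^3*W^3 + (n:ℝ) + 2*k ≤ 8 * (X^3*Y^3 + n + k) := by linarith
  have hK : (0:ℝ) ≤ 2 * 10^33 * ((M:ℝ)+1) := by positivity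
  have := mul_le_mul_of_nonneg_left this hK
  linarith
end PST

theorem plane_sphere_tangencies (M : ℕ) :
    ∃ A : ℝ, 0 < A ∧
      ∀ (n k : ℕ) (Pl S : Finset (Set Pt3)),
        Pl.card = n → S.card = k →
        (∀ q ∈ Pl, IsPlane3 q) → (∀ s ∈ S, IsSphere3 s) →
        (¬ ∃ F : Finset (Set Pt3), F ⊆ Pl ∧ ∃ G : Finset (Set Pt3), G ⊆ S ∧
          F.card = M ∧ G.card = 3 ∧ ∀ q ∈ F, ∀ s ∈ G, Tangent3 q s) →
        (¬ ∃ F : Finset (Set Pt3), F ⊆ Pl ∧ ∃ G : Finset (Set Pt3), G ⊆ S ∧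
          F.card = 3 ∧ G.card = M ∧ ∀ q ∈ F, ∀ s ∈ G, Tangent3 q s) →
        (({q : Set Pt3 × Set Pt3 | q.1 ∈ Pl ∧ q.2 ∈ S ∧ Tangent3 q.1 q.2}).ncard : ℝ) ≤
          A * ((n : ℝ) ^ ((3 : ℝ) / 4) * (k : ℝ) ^ ((3 : ℝ) / 4) + (n : ℝ) + (k : ℝ)) := by
  refine ⟨8 * (2 * 10^33 * ((M:ℝ)+1)), by positivity, ?_⟩
  intro n k Pl S hn hk hPl hS _ hK
  exact PST.final M n k Pl S hn hk hPl hS hK
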